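/- Let n ≥ 2 and let A ⊆ ℝⁿ be a Borel set with dimH A > n−1. For x ∈ ℝⁿ, let π_x : ℝⁿ \ {x} → S^{n−1} be the radial projection π_x(y) = (y − x)/‖y − x‖. Then the set of points x ∈ ℝⁿ for which H^{n−1}( π_x( A \ {x} ) ) = 0 has Hausdorff dimension at most n−1. -/

import Mathlib

open MeasureTheory Metric Set
open scoped ENNReal RealInnerProductSpace

/-!
Suppose that the set of points from which `A` is invisible had dimension greater than `n - 1`.
Frostman's lemma then yields measures `μ` on a compact part of this set and `ν` on a compact subset
`K` of `A`, both with `measure (ball x ρ) ≤ C ρ ^ t` for some `t > n - 1`, and `K` may be taken to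
lie strictly on one side of the support of `μ` with respect to some linear functional `φ`.

Parametrise the lines transversal to the level sets of `φ` by slope and intercept, and let `Λ` be
the measure on lines obtained by drawing through a `μ`-random point a line of random slope. Two
points at distance `d` have about `δ ^ (n - 1) / d ^ (n - 1)` common slopes up to error `δ`, so
the energy bound for `μ` shows that `Λ` has a density in `L²`; likewise the `ν`-measures of
`δ`-tubes, divided by `δ ^ (n - 1)`, are bounded in `L²` uniformly in `δ`. Their integral against
`Λ` is bounded below, since any two points of the two supports are joined by a line. By
Cauchy–Schwarz, the lines meeting `K` cannot form a `Λ`-null set, whereas invisibility from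
`μ`-almost every point says that they do.
-/

/-- A sequence of successively finer partitions of `X`: `cell k x` is the label of the cell of
generation `k` that contains `x`. The pair `(k, c)` stands for the set `{x | cell k x = c}`. -/
structure NestedPartitions (X C : Type*) where
  cell : ℕ → X → C
  cell_eq_of_le : ∀ {k l x y}, l ≤ k → cell k x = cell k y → cell l x = cell l y

namespace NestedPartitions

variable {X C : Type*} (P : NestedPartitions X C)

/-- The cells of the family `S` cover `B`. -/
def Covers (S : Set (ℕ × C)) (B : Set X) : Prop := ∀ x ∈ B, ∃ k, (k, P.cell k x) ∈ S

/-- The members of `S` that meet no member of `S` of smaller generation. -/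
def maximals (S : Set (ℕ × C)) : Set (ℕ × C) :=
  {p | p ∈ S ∧ ∀ l < p.1, ∀ x, P.cell p.1 x = p.2 → (l, P.cell l x) ∉ S}

/-- The least total weight of a covering of `B` by cells. -/
noncomputable def content (w : ℕ × C → ℝ≥0∞) (B : Set X) : ℝ≥0∞ :=
  ⨅ (S : Set (ℕ × C)) (_ : P.Covers S B), ∑' p : S, w p

variable {P} {w : ℕ × C → ℝ≥0∞} {S T : Set (ℕ × C)} {B D : Set X}

theorem content_le_tsum (h : P.Covers S B) : P.content w B ≤ ∑' p : S, w p := iInf₂_le S h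

theorem content_mono (h : B ⊆ D) : P.content w B ≤ P.content w D :=
  le_iInf₂ fun _ hS => content_le_tsum fun x hx => hS x (h hx)

theorem exists_covers_tsum_lt {c : ℝ≥0∞} (h : P.content w B < c) :
    ∃ S, P.Covers S B ∧ ∑' p : S, w p < c := by
  simpa [content, iInf_lt_iff] using h

theorem maximals_subset : P.maximals S ⊆ S := fun _ h => h.1

theorem covers_maximals (h : P.Covers S B) : P.Covers (P.maximals S) B := by
  classical
  intro x hx
  refine ⟨Nat.find (h x hx), Nat.find_spec (h x hx), fun l hl y hy => ?_⟩
  rw [P.cell_eq_of_le hl.le hy]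
  exact Nat.find_min (h x hx) hl

theorem maximals_union_subset : P.maximals (S ∪ T) ⊆ P.maximals (P.maximals S ∪ T) := by
  rintro p ⟨hp, hmin⟩
  exact ⟨hp.imp_left fun h => ⟨h, fun l hl x hx hS => hmin l hl x hx (Or.inl hS)⟩,
    fun l hl x hx h => hmin l hl x hx (h.imp_left fun h => h.1)⟩

/-- The cells of `S ∪ T` that are not maximal, together with those of `S ∩ T`, still cover
`B ∩ D`. -/
theorem tsum_maximals_union_add_content_inter_le (hS : P.Covers S B) (hT : P.Covers T D) :
    ∑' p : P.maximals (S ∪ T), w p + P.content w (B ∩ D) ≤ ∑' p : S, w p + ∑' p : T, w p := by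
  have hcov : P.Covers ((S ∩ T) ∪ ((S ∪ T) \ P.maximals (S ∪ T))) (B ∩ D) := by
    rintro x ⟨hB, hD⟩
    obtain ⟨k, hk⟩ := hS x hB
    obtain ⟨l, hl⟩ := hT x hD
    rcases lt_trichotomy k l with h | rfl | h
    · exact ⟨l, Or.inr ⟨Or.inr hl, fun hm => hm.2 k h x rfl (Or.inl hk)⟩⟩
    · exact ⟨k, Or.inl ⟨hk, hl⟩⟩
    · exact ⟨k, Or.inr ⟨Or.inl hk, fun hm => hm.2 l h x rfl (Or.inr hl)⟩⟩
  refine (add_le_add_right (content_le_tsum hcov) _).trans ?_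
  simp only [tsum_subtype, ← ENNReal.tsum_add]
  refine ENNReal.tsum_le_tsum fun p => ?_
  have hsub := @maximals_subset X C P (S ∪ T) p
  by_cases h1 : p ∈ S <;> by_cases h2 : p ∈ T <;> by_cases h3 : p ∈ P.maximals (S ∪ T) <;>
    simp_all [indicator]

theorem tsum_maximals_accumulate_le {A : ℕ → Set X} (hA : Monotone A)
    (hfin : ∀ k, P.content w (A k) ≠ ∞) {S : ℕ → Set (ℕ × C)} (hS : ∀ k, P.Covers (S k) (A k))
    {e : ℕ → ℝ≥0∞} (hcost : ∀ k, ∑' p : S k, w p ≤ P.content w (A k) + e k) (N : ℕ) :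
    ∑' p : P.maximals (accumulate S N), w p ≤
      P.content w (A N) + ∑ k ∈ Finset.range (N + 1), e k := by
  induction N with
  | zero =>
    rw [accumulate_zero_nat, Finset.sum_range_one]
    exact (ENNReal.tsum_mono_subtype w maximals_subset).trans (hcost 0)
  | succ N ih =>
    have hcov : P.Covers (P.maximals (accumulate S N)) (A N) := covers_maximals fun x hx =>
      (hS N x hx).imp fun _ hk => subset_accumulate hk
    refine (ENNReal.add_le_add_iff_right (hfin N)).1 ?_
    calc ∑' p : P.maximals (accumulate S (N + 1)), w p + P.content w (A N)
        ≤ ∑' p : P.maximals (P.maximals (accumulate S N) ∪ S (N + 1)), w p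
            + P.content w (A N ∩ A (N + 1)) := by
          rw [inter_eq_self_of_subset_left (hA N.le_succ), accumulate_succ]
          exact add_le_add_left (ENNReal.tsum_mono_subtype w maximals_union_subset) _
      _ ≤ ∑' p : P.maximals (accumulate S N), w p + ∑' p : S (N + 1), w p :=
          tsum_maximals_union_add_content_inter_le hcov (hS (N + 1))
      _ ≤ (P.content w (A N) + ∑ k ∈ Finset.range (N + 1), e k)
            + (P.content w (A (N + 1)) + e (N + 1)) := add_le_add ih (hcost (N + 1))
      _ = P.content w (A (N + 1)) + ∑ k ∈ Finset.range (N + 1 + 1), e k + P.content w (A N) := by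
          rw [Finset.sum_range_succ _ (N + 1)]; ring

theorem eventually_mem_maximals_accumulate {S : ℕ → Set (ℕ × C)} {p : ℕ × C}
    (hp : p ∈ P.maximals (⋃ k, S k)) : ∀ᶠ N in Filter.atTop, p ∈ P.maximals (accumulate S N) := by
  obtain ⟨k, hk⟩ := mem_iUnion.1 hp.1
  filter_upwards [Filter.eventually_ge_atTop k] with N hN
  refine ⟨mem_accumulate.2 ⟨k, hN, hk⟩, fun l hl x hx h => hp.2 l hl x hx ?_⟩
  exact accumulate_subset_iUnion N h

theorem content_iUnion_le {A : ℕ → Set X} (hA : Monotone A) :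
    P.content w (⋃ k, A k) ≤ ⨆ k, P.content w (A k) := by
  refine ENNReal.le_of_forall_pos_le_add fun ε hε hfin => ?_
  have hfin' : ∀ k, P.content w (A k) ≠ ∞ := fun k => ((le_iSup _ k).trans_lt hfin).ne
  obtain ⟨e, he0, hes⟩ := ENNReal.exists_pos_sum_of_countable (ENNReal.coe_ne_zero.2 hε.ne') ℕ
  choose S hS hcost using fun k => exists_covers_tsum_lt
    (ENNReal.lt_add_right (hfin' k) (ENNReal.coe_ne_zero.2 (he0 k).ne'))
  have hcov : P.Covers (⋃ k, S k) (⋃ k, A k) := fun x hx => by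
    obtain ⟨k, hk⟩ := mem_iUnion.1 hx
    exact (hS k x hk).imp fun _ hl => mem_iUnion.2 ⟨k, hl⟩
  refine (content_le_tsum (covers_maximals hcov)).trans ?_
  rw [ENNReal.tsum_eq_iSup_sum]
  refine iSup_le fun F => ?_
  obtain ⟨N, hN⟩ := ((Filter.eventually_all_finset F).2 fun p _ =>
    eventually_mem_maximals_accumulate p.2).exists
  calc ∑ p ∈ F, w p ≤ ∑' p : P.maximals (accumulate S N), w p := by
        rw [← Finset.tsum_subtype F fun p => w p]
        exact ENNReal.tsum_comp_le_tsum_of_injective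
          (f := fun p : F => (⟨p, hN p p.2⟩ : P.maximals (accumulate S N)))
          (fun p q hpq => Subtype.ext (Subtype.ext (by simpa using hpq))) fun p => w p
    _ ≤ P.content w (A N) + ∑ k ∈ Finset.range (N + 1), (e k : ℝ≥0∞) :=
        tsum_maximals_accumulate_le hA hfin' hS (fun k => (hcost k).le) N
    _ ≤ (⨆ k, P.content w (A k)) + ε :=
        add_le_add (le_iSup (fun k => P.content w (A k)) N) ((ENNReal.sum_le_tsum _).trans hes.le)

/-- Stack intervals of length `c` along the cells that contain a point. -/
theorem exists_measurableSet_volume_le_Ico_subset (c : ℕ × C → NNReal) :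
    ∃ I : ℕ × C → Set ℝ, (∀ p, MeasurableSet (I p) ∧ volume (I p) ≤ c p) ∧
      ∀ x, 1 ≤ ∑' k, (c (k, P.cell k x) : ℝ≥0∞) → Ico 0 1 ⊆ ⋃ k, I (k, P.cell k x) := by
  classical
  let g : ℕ → X → NNReal := fun k x => ∑ l ∈ Finset.range k, c (l, P.cell l x)
  have g_congr : ∀ {k x y}, P.cell k x = P.cell k y → g k x = g k y := fun hxy =>
    Finset.sum_congr rfl fun l hl => by
      rw [P.cell_eq_of_le (Finset.mem_range.1 hl).le hxy]
  let I : ℕ × C → Set ℝ := fun p =>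
    if h : ∃ x, P.cell p.1 x = p.2 then Ico (g p.1 h.choose : ℝ) (g p.1 h.choose + c p) else ∅
  have I_cell : ∀ k x, I (k, P.cell k x) = Ico (g k x : ℝ) (g (k + 1) x) := by
    intro k x
    have h : ∃ y, P.cell k y = P.cell k x := ⟨x, rfl⟩
    simp only [I, dif_pos h, g_congr h.choose_spec]
    simp [g, Finset.sum_range_succ]
  refine ⟨I, fun p => ?_, fun x hx t ht => ?_⟩
  · by_cases h : ∃ x, P.cell p.1 x = p.2
    · simp [I, dif_pos h]
    · simp [I, dif_neg h]
  · have hex : ∃ k, t < g k x := by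
      have hlt : ENNReal.ofReal t < ∑' k, (c (k, P.cell k x) : ℝ≥0∞) :=
        (ENNReal.ofReal_lt_one.2 ht.2).trans_le hx
      rw [ENNReal.tsum_eq_iSup_nat, lt_iSup_iff] at hlt
      refine hlt.imp fun k hk => ?_
      rwa [← ENNReal.ofNNReal_finsetSum, ← ENNReal.ofReal_coe_nnreal,
        ENNReal.ofReal_lt_ofReal_iff_of_nonneg ht.1] at hk
    obtain ⟨k, hk⟩ : ∃ k, Nat.find hex = k + 1 := Nat.exists_eq_succ_of_ne_zero fun h0 =>
      ht.1.not_gt (by simpa only [h0, g, Finset.range_zero, Finset.sum_empty, NNReal.coe_zero]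
        using Nat.find_spec hex)
    refine mem_iUnion.2 ⟨k, ?_⟩
    rw [I_cell]
    exact ⟨not_lt.1 (Nat.find_min hex (hk ▸ k.lt_succ_self)), hk ▸ Nat.find_spec hex⟩

theorem content_le_tsum_mul [Countable C] (c : ℕ × C → NNReal)
    (h : ∀ x ∈ B, 1 ≤ ∑' k, (c (k, P.cell k x) : ℝ≥0∞)) :
    P.content w B ≤ ∑' p, c p * w p := by
  obtain ⟨I, hI, hcov⟩ := P.exists_measurableSet_volume_le_Ico_subset c
  calc P.content w B = ∫⁻ _ in Ico (0 : ℝ) 1, P.content w B := by simp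
    _ ≤ ∫⁻ t in Ico (0 : ℝ) 1, ∑' p, (I p).indicator (fun _ => w p) t := by
        refine setLIntegral_mono' measurableSet_Ico fun t ht => ?_
        have : P.Covers {p | t ∈ I p} B := fun x hx => mem_iUnion.1 (hcov x (h x hx) ht)
        exact (content_le_tsum this).trans_eq (tsum_subtype _ _)
    _ ≤ ∫⁻ t, ∑' p, (I p).indicator (fun _ => w p) t := setLIntegral_le_lintegral _ _
    _ = ∑' p, w p * volume (I p) := by
        rw [lintegral_tsum fun p => (measurable_const.indicator (hI p).1).aemeasurable]
        simp only [lintegral_indicator_const (hI _).1]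
    _ ≤ ∑' p, c p * w p := ENNReal.tsum_le_tsum fun p => by
        rw [mul_comm]
        exact mul_le_mul_left (hI p).2 _

end NestedPartitions

/-- The sequences of naturals whose first `k` terms are at most those of `g`. -/
def initialBox (g : ℕ → ℕ) (k : ℕ) : Set (ℕ → ℕ) := {x | ∀ i < k, x i ≤ g i}

theorem initialBox_congr {g g' : ℕ → ℕ} {k : ℕ} (h : ∀ i < k, g i = g' i) :
    initialBox g k = initialBox g' k :=
  ext fun _ => forall₂_congr fun i hi => by rw [h i hi]

theorem monotone_initialBox_update (g : ℕ → ℕ) (k : ℕ) :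
    Monotone fun m => initialBox (Function.update g k m) (k + 1) := fun _ _ hmm _ hx i hi =>
  (hx i hi).trans (update_le_update_iff.2 ⟨hmm, fun _ _ => le_rfl⟩ i)

theorem iUnion_initialBox_update (g : ℕ → ℕ) (k : ℕ) :
    ⋃ m, initialBox (Function.update g k m) (k + 1) = initialBox g k := by
  ext x
  refine ⟨fun h i hi => ?_, fun hx => mem_iUnion.2 ⟨x k, fun i hi => ?_⟩⟩
  · obtain ⟨m, hm⟩ := mem_iUnion.1 h
    simpa [hi.ne] using hm i (hi.trans k.lt_succ_self)
  · rcases Nat.lt_succ_iff_lt_or_eq.1 hi with h | rfl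
    · simpa [h.ne] using hx i h
    · simp

theorem exists_forall_lt_image_initialBox {X : Type*} {φ : Set X → ℝ≥0∞}
    (hφ : ∀ A : ℕ → Set X, Monotone A → φ (⋃ k, A k) ≤ ⨆ k, φ (A k))
    {f : (ℕ → ℕ) → X} {c : ℝ≥0∞} (hc : c < φ (range f)) :
    ∃ g, ∀ k, c < φ (f '' initialBox g k) := by
  have hstep : ∀ g k, c < φ (f '' initialBox g k) →
      ∃ m, c < φ (f '' initialBox (Function.update g k m) (k + 1)) := by
    intro g k h
    rw [← iUnion_initialBox_update, image_iUnion] at h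
    exact lt_iSup_iff.1 (h.trans_le (hφ _ fun _ _ hmm =>
      image_mono (monotone_initialBox_update g k hmm)))
  choose! m hm using hstep
  let G : ℕ → ℕ → ℕ := Nat.rec 0 fun k g => Function.update g k (m g k)
  have hG : ∀ k, c < φ (f '' initialBox (G k) k) := by
    intro k
    induction k with
    | zero => simpa [initialBox] using hc
    | succ k ih => exact hm _ _ ih
  have G_eq : ∀ k, ∀ i < k, G k i = G (i + 1) i := by
    intro k
    induction k with
    | zero => simp
    | succ k ih =>
      intro i hi
      rcases Nat.lt_succ_iff_lt_or_eq.1 hi with h | rfl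
      · exact (Function.update_of_ne h.ne _ _).trans (ih i h)
      · rfl
  exact ⟨fun i => G (i + 1) i, fun k => initialBox_congr (G_eq k) ▸ hG k⟩

theorem exists_image_initialBox_subset {X : Type*} [TopologicalSpace X] {f : (ℕ → ℕ) → X}
    (hf : Continuous f) {g : ℕ → ℕ} {U : Set X} (hU : IsOpen U) (h : f '' Iic g ⊆ U) :
    ∃ k, f '' initialBox g k ⊆ U := by
  by_contra! hcon
  choose x hx hxU using fun k => by simpa only [image_subset_iff, not_subset] using hcon k
  have hcomp : IsCompact (Iic g) := Icc_bot (a := g) ▸ isCompact_Icc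
  obtain ⟨y, hy, s, hs, hlim⟩ := hcomp.tendsto_subseq
    (x := fun k => x k ⊓ g) fun k => mem_Iic.2 inf_le_right
  have hlim' : Filter.Tendsto (fun k => x (s k)) Filter.atTop (nhds y) := by
    rw [tendsto_pi_nhds] at hlim ⊢
    intro i
    refine (hlim i).congr' ?_
    filter_upwards [Filter.eventually_gt_atTop i] with k hk
    exact min_eq_left (hx (s k) i (hk.trans_le (hs.id_le k)))
  obtain ⟨k, hk⟩ := ((hf.tendsto y).comp hlim').eventually_mem
    (hU.mem_nhds (h ⟨y, hy, rfl⟩)) |>.exists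
  exact hxU _ hk

/-- **Choquet capacitability** of analytic sets. -/
theorem exists_isCompact_forall_isOpen_le_of_analyticSet {X : Type*} [TopologicalSpace X]
    {φ : Set X → ℝ≥0∞} (hmono : Monotone φ)
    (hφ : ∀ A : ℕ → Set X, Monotone A → φ (⋃ k, A k) ≤ ⨆ k, φ (A k))
    {B : Set X} (hB : AnalyticSet B) {c : ℝ≥0∞} (hc : c < φ B) :
    ∃ K ⊆ B, IsCompact K ∧ ∀ U, IsOpen U → K ⊆ U → c ≤ φ U := by
  rw [AnalyticSet] at hB
  rcases hB with rfl | ⟨f, hf, rfl⟩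
  · exact ⟨∅, empty_subset _, isCompact_empty, fun U _ _ => hc.le.trans (hmono (empty_subset U))⟩
  obtain ⟨g, hg⟩ := exists_forall_lt_image_initialBox hφ hc
  refine ⟨f '' Iic g, image_subset_range _ _, (Icc_bot (a := g) ▸ isCompact_Icc).image hf,
    fun U hU hgU => ?_⟩
  obtain ⟨k, hk⟩ := exists_image_initialBox_subset hf hU hgU
  exact (hg k).le.trans (hmono hk)

/-- The least total weight of a fractional covering by the sets `Q p`, in which `Q p` is used with
multiplicity `c p`, that dominates `f`. -/
noncomputable def fractionalCost {K ι : Type*} (Q : ι → Set K) (w : ι → ℝ≥0∞) (f : K → ℝ≥0∞) :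
    ℝ≥0∞ :=
  ⨅ (c : ι → NNReal) (_ : ∀ x, f x ≤ ∑' p, (c p : ℝ≥0∞) * (Q p).indicator 1 x),
    ∑' p, c p * w p

section FractionalCost

variable {K ι : Type*} {Q : ι → Set K} {w : ι → ℝ≥0∞}

theorem fractionalCost_mono : Monotone (fractionalCost Q w) := fun _ _ hfg =>
  le_iInf₂ fun c hc => iInf₂_le c fun x => (hfg x).trans (hc x)

theorem fractionalCost_add_le (f g : K → ℝ≥0∞) :
    fractionalCost Q w (f + g) ≤ fractionalCost Q w f + fractionalCost Q w g := by
  simp only [fractionalCost, iInf_subtype']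
  refine ENNReal.le_iInf_add_iInf fun c d => ?_
  refine iInf_le_of_le ⟨c.1 + d.1, fun x => ?_⟩ ?_
  · refine (add_le_add (c.2 x) (d.2 x)).trans_eq ?_
    simp [add_mul, ENNReal.tsum_add]
  · simp [add_mul, ENNReal.tsum_add]

theorem fractionalCost_mul_le (r : NNReal) (f : K → ℝ≥0∞) :
    fractionalCost Q w (fun x => r * f x) ≤ r * fractionalCost Q w f := by
  rcases eq_or_ne r 0 with rfl | hr
  · exact (iInf₂_le 0 (by simp)).trans (by simp)
  simp only [fractionalCost, iInf_subtype']
  rw [ENNReal.mul_iInf_of_ne (ENNReal.coe_ne_zero.2 hr) ENNReal.coe_ne_top]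
  refine le_iInf fun c => iInf_le_of_le ⟨r • c.1, fun x => ?_⟩ ?_
  · refine (mul_le_mul_right (c.2 x) _).trans_eq ?_
    simp [mul_assoc, ENNReal.tsum_mul_left]
  · simp [mul_assoc, ENNReal.tsum_mul_left]

theorem fractionalCost_le_sum {f : K → ℝ≥0∞} (F : Finset ι) (hf : ∀ x, f x ≤ 1)
    (hfF : ∀ x, f x ≠ 0 → ∃ p ∈ F, x ∈ Q p) : fractionalCost Q w f ≤ ∑ p ∈ F, w p := by
  classical
  refine (iInf₂_le (fun p => if p ∈ F then 1 else 0) fun x => ?_).trans_eq ?_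
  · by_cases hx : f x = 0
    · simp [hx]
    obtain ⟨p, hp, hxp⟩ := hfF x hx
    refine le_trans ?_ (ENNReal.le_tsum p)
    simpa [hp, hxp] using hf x
  · rw [tsum_eq_sum (s := F) fun p hp => by simp [hp]]
    exact Finset.sum_congr rfl fun p hp => by simp [hp]

end FractionalCost

theorem exists_linearMap_eq_and_le_of_sublinear {E : Type*} [AddCommGroup E] [Module ℝ E]
    {p : E → ℝ} (hsmul : ∀ r : ℝ, 0 < r → ∀ x, p (r • x) = r * p x)
    (hadd : ∀ x y, p (x + y) ≤ p x + p y) (e : E) :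
    ∃ L : E →ₗ[ℝ] ℝ, L e = p e ∧ ∀ x, L x ≤ p x := by
  have hp0 : p 0 = 0 := by
    have := hsmul 2 two_pos 0
    rw [smul_zero] at this
    linarith
  have he : ∀ r : ℝ, r • e = 0 → r • p e = 0 := fun r hr => by
    rcases smul_eq_zero.1 hr with rfl | rfl
    · exact zero_smul ℝ _
    · rw [hp0, smul_zero]
  obtain ⟨L, hL, hLp⟩ := exists_extension_of_le_sublinear
    (LinearPMap.mkSpanSingleton' e (p e) he) p hsmul hadd (by
      rintro ⟨x, hx⟩
      obtain ⟨r, rfl⟩ := Submodule.mem_span_singleton.1 hx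
      rw [LinearPMap.mkSpanSingleton'_apply]
      change r * p e ≤ p (r • e)
      rcases lt_trichotomy r 0 with hr | rfl | hr
      · have h1 := hadd (r • e) (-r • e)
        rw [hsmul (-r) (neg_pos.2 hr), ← add_smul, add_neg_cancel, zero_smul, hp0] at h1
        linarith
      · simp [hp0]
      · exact (hsmul r hr e).ge)
  refine ⟨L, ?_, hLp⟩
  rw [hL ⟨e, Submodule.mem_span_singleton_self e⟩]
  exact LinearPMap.mkSpanSingleton'_apply_self _ _ _ _

theorem map_smul_of_forall_map_smul_le {E : Type*} [MulAction ℝ E] {p : E → ℝ}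
    (h : ∀ r : ℝ, 0 < r → ∀ x, p (r • x) ≤ r * p x) {r : ℝ} (hr : 0 < r) (x : E) :
    p (r • x) = r * p x := by
  refine (h r hr x).antisymm ?_
  have hinv := h r⁻¹ (inv_pos.2 hr) (r • x)
  rwa [inv_smul_smul₀ hr.ne', inv_mul_eq_div, le_div_iff₀' hr] at hinv

section Duality

open scoped CompactlySupported

variable {K : Type*} [TopologicalSpace K] [CompactSpace K] [T2Space K] [MeasurableSpace K]
  [BorelSpace K]

theorem exists_measure_of_positive_sublinear {p : C_c(K, ℝ) → ℝ}
    (hsmul : ∀ r : ℝ, 0 < r → ∀ f, p (r • f) = r * p f)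
    (hadd : ∀ f g, p (f + g) ≤ p f + p g) (hneg : ∀ f, 0 ≤ f → p (-f) ≤ 0) (e : C_c(K, ℝ)) :
    ∃ μ : Measure K, IsFiniteMeasure μ ∧ ∫ x, e x ∂μ = p e ∧
      ∀ f : C_c(K, ℝ), ∫ x, f x ∂μ ≤ p f := by
  obtain ⟨L, hLe, hLp⟩ := exists_linearMap_eq_and_le_of_sublinear hsmul hadd e
  let Λ : C_c(K, ℝ) →ₚ[ℝ] ℝ := PositiveLinearMap.mk₀ L fun f hf => by
    have := (hLp (-f)).trans (hneg f hf)
    rwa [map_neg, neg_nonpos] at this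
  refine ⟨RealRMK.rieszMeasure Λ, inferInstance, ?_, fun f => ?_⟩
  · exact (RealRMK.integral_rieszMeasure Λ e).trans hLe
  · exact (RealRMK.integral_rieszMeasure Λ f).trans_le (hLp f)

theorem exists_measure_of_sublinear {N : (K → ℝ≥0∞) → ℝ≥0∞} (hmono : Monotone N)
    (hadd : ∀ f g, N (f + g) ≤ N f + N g)
    (hsmul : ∀ (r : NNReal) f, N (fun x => r * f x) ≤ r * N f) (hfin : N 1 ≠ ∞) :
    ∃ μ : Measure K, μ univ = N 1 ∧
      ∀ f : C(K, NNReal), ∫⁻ x, f x ∂μ ≤ N fun x => f x := by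
  let p : C_c(K, ℝ) → ℝ := fun f => (N fun x => ENNReal.ofReal (f x)).toReal
  have hN : ∀ f : C_c(K, ℝ), N (fun x => ENNReal.ofReal (f x)) ≠ ∞ := by
    intro f
    obtain ⟨M, hM⟩ := (isCompact_range f.continuous).bddAbove
    refine ne_top_of_le_ne_top ?_ ((hmono fun x => ?_).trans (hsmul M.toNNReal 1))
    · finiteness
    · rw [Pi.one_apply, mul_one]
      exact ENNReal.ofReal_le_ofReal (hM ⟨x, rfl⟩)
  have hp_smul_le : ∀ r : ℝ, 0 < r → ∀ f, p (r • f) ≤ r * p f := by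
    intro r hr f
    have := ENNReal.toReal_mono (by finiteness [hN f]) (hsmul r.toNNReal fun x => .ofReal (f x))
    rw [ENNReal.toReal_mul, ENNReal.coe_toReal, Real.coe_toNNReal r hr.le] at this
    refine le_of_eq_of_le ?_ this
    exact congrArg (fun g => (N g).toReal) (funext fun x => ENNReal.ofReal_mul hr.le)
  have hp_add : ∀ f g, p (f + g) ≤ p f + p g := by
    intro f g
    rw [← ENNReal.toReal_add (hN f) (hN g)]
    refine ENNReal.toReal_mono (by finiteness [hN f, hN g]) ((hmono fun x => ?_).trans (hadd _ _))
    exact ENNReal.ofReal_add_le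
  have hp_neg : ∀ f, 0 ≤ f → p (-f) ≤ 0 := by
    intro f hf
    have h0 : (fun x => ENNReal.ofReal ((-f) x)) = 0 := funext fun x =>
      ENNReal.ofReal_of_nonpos (neg_nonpos.2 (hf x))
    have hN0 : N 0 = 0 := by simpa [← Pi.zero_def] using hsmul 0 0
    simp only [p, h0, hN0, ENNReal.toReal_zero, le_refl]
  obtain ⟨μ, hμ, hμ1, hμp⟩ := exists_measure_of_positive_sublinear
    (fun _ => map_smul_of_forall_map_smul_le hp_smul_le) hp_add hp_neg
    (CompactlySupportedContinuousMap.continuousMapEquiv 1)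
  refine ⟨μ, ?_, fun f => ?_⟩
  · have : ∫ _, (1 : ℝ) ∂μ = (N fun _ => ENNReal.ofReal 1).toReal := hμ1
    rw [ENNReal.ofReal_one, integral_const, smul_eq_mul, mul_one] at this
    exact (ENNReal.toReal_eq_toReal_iff' (measure_ne_top μ univ) hfin).1 this
  · let f' : C_c(K, ℝ) := CompactlySupportedContinuousMap.continuousMapEquiv
      ((ContinuousMap.mk _ NNReal.continuous_coe).comp f)
    have := ENNReal.ofReal_le_ofReal (hμp f')
    rw [ofReal_integral_eq_lintegral_ofReal, ENNReal.ofReal_toReal (hN f')] at this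
    · simpa [f'] using this
    · exact f'.continuous.integrable_of_hasCompactSupport f'.hasCompactSupport
    · exact Filter.Eventually.of_forall fun x => (f x).2

theorem exists_measure_of_fractionalCost {ι : Type*} {Q : ι → Set K} {w : ι → ℝ≥0∞}
    (hfin : fractionalCost Q w 1 ≠ ∞) :
    ∃ μ : Measure K, μ univ = fractionalCost Q w 1 ∧ ∀ S G : Set K, IsCompact S → IsOpen G →
      S ⊆ G → ∀ F : Finset ι, G ⊆ ⋃ p ∈ F, Q p → μ S ≤ ∑ p ∈ F, w p := by
  obtain ⟨μ, hμ, hμw⟩ := exists_measure_of_sublinear fractionalCost_mono fractionalCost_add_le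
    fractionalCost_mul_le hfin
  refine ⟨μ, hμ, fun S G hS hG hSG F hGF => ?_⟩
  obtain ⟨f, hfS, hfG, -, hf⟩ := exists_continuous_one_zero_of_isCompact hS hG.isClosed_compl
    (disjoint_compl_right_iff_subset.2 hSG)
  let f' : C(K, NNReal) := ContinuousMap.mk _ (continuous_real_toNNReal.comp f.continuous)
  calc μ S = ∫⁻ x, S.indicator 1 x ∂μ := (lintegral_indicator_one hS.measurableSet).symm
    _ ≤ ∫⁻ x, f' x ∂μ := lintegral_mono fun x => by
        by_cases hx : x ∈ S
        · simp [f', hx, hfS hx]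
        · simp [hx]
    _ ≤ fractionalCost Q w fun x => f' x := hμw f'
    _ ≤ ∑ p ∈ F, w p := fractionalCost_le_sum F (fun x => by simpa [f'] using (hf x).2)
        fun x hx => by
          have hxG : x ∈ G := by
            by_contra hxG
            simp [f', hfG hxG] at hx
          simpa using hGF hxG

end Duality

namespace NestedPartitions

theorem content_le_fractionalCost {X C : Type*} [Countable C] (P : NestedPartitions X C)
    (w : ℕ × C → ℝ≥0∞) (B : Set X) :
    P.content w B ≤ fractionalCost (fun p => {x : B | P.cell p.1 x = p.2}) w 1 := by
  refine le_iInf₂ fun c hc => content_le_tsum_mul c fun x hx => (hc ⟨x, hx⟩).trans_eq ?_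
  rw [ENNReal.tsum_prod']
  refine tsum_congr fun k => ?_
  rw [tsum_eq_single (P.cell k x)]
  · simp
  · simp +contextual [eq_comm]

end NestedPartitions

/-- The partitions of `ι → ℝ` into half-open dyadic cubes, those of generation `k` having side
`2⁻ᵏ`. -/
noncomputable def dyadicCubes (ι : Type*) : NestedPartitions (ι → ℝ) (ι → ℤ) where
  cell k x i := ⌊2 ^ k * x i⌋
  cell_eq_of_le {k l x y} hlk h := by
    have floor_eq : ∀ z : ι → ℝ, (fun i => ⌊2 ^ l * z i⌋) =
        fun i => ⌊2 ^ k * z i⌋ / ((2 ^ (k - l) : ℕ) : ℤ) := by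
      intro z
      funext i
      obtain ⟨j, rfl⟩ := Nat.exists_eq_add_of_le hlk
      rw [← Int.floor_div_natCast]
      congr 1
      push_cast
      rw [Nat.add_sub_cancel_left, pow_add]
      field_simp
    rw [floor_eq, floor_eq]
    exact funext fun i => congrArg (· / _) (congrFun h i)

namespace dyadicCubes

variable {ι : Type*} [Fintype ι] {k j : ℕ} {x y : ι → ℝ}

theorem cell_mem_Icc [DecidableEq ι] (h : dist x y ≤ j * (1 / 2) ^ k) :
    (dyadicCubes ι).cell k x ∈
      Finset.Icc ((dyadicCubes ι).cell k y - j) ((dyadicCubes ι).cell k y + j) := by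
  have hi : ∀ i, |2 ^ k * x i - 2 ^ k * y i| ≤ j := fun i => by
    rw [← mul_sub, abs_mul, abs_of_pos (by positivity)]
    calc (2 : ℝ) ^ k * |x i - y i| ≤ 2 ^ k * (j * (1 / 2) ^ k) := by
          gcongr
          exact (dist_le_pi_dist x y i).trans h
      _ = j := by rw [one_div, inv_pow]; field_simp
  rw [Finset.mem_Icc, Pi.le_def, Pi.le_def, ← forall_and]
  intro i
  obtain ⟨h1, h2⟩ := abs_le.1 (hi i)
  change ⌊2 ^ k * y i⌋ - (j : ℤ) ≤ ⌊2 ^ k * x i⌋ ∧ ⌊2 ^ k * x i⌋ ≤ ⌊2 ^ k * y i⌋ + (j : ℤ)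
  rw [← Int.floor_sub_natCast, ← Int.floor_add_natCast]
  exact ⟨Int.floor_mono (by linarith), Int.floor_mono (by linarith)⟩

theorem card_Icc_sub_add [DecidableEq ι] (c : ι → ℤ) (j : ℕ) :
    (Finset.Icc (c - j) (c + j)).card = (2 * j + 1) ^ Fintype.card ι := by
  have : ∀ i, (c i + j + 1 - (c i - j)).toNat = 2 * j + 1 := by omega
  simp [Pi.card_Icc, this]

theorem exists_isOpen_content_le (w : ℕ → ℝ≥0∞) {S : Set (ℕ × (ι → ℤ))} {K : Set (ι → ℝ)}
    (hS : (dyadicCubes ι).Covers S K) :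
    ∃ U, IsOpen U ∧ K ⊆ U ∧ (dyadicCubes ι).content (fun p => w p.1) U ≤
      3 ^ Fintype.card ι * ∑' p : S, w p.1.1 := by
  classical
  let U := ⋃ p ∈ S, thickening ((1 / 2) ^ p.1) {x | (dyadicCubes ι).cell p.1 x = p.2}
  let T : ℕ × (ι → ℤ) → Finset (ℕ × (ι → ℤ)) := fun p => {p.1} ×ˢ Finset.Icc (p.2 - 1) (p.2 + 1)
  have hcov : (dyadicCubes ι).Covers (⋃ p ∈ S, (T p : Set (ℕ × (ι → ℤ)))) U := by
    intro x hx
    obtain ⟨⟨k, c⟩, hp, hxp⟩ := mem_iUnion₂.1 hx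
    obtain ⟨y, hy : (dyadicCubes ι).cell k y = c, hxy⟩ := mem_thickening_iff.1 hxp
    refine ⟨k, mem_biUnion hp ?_⟩
    simpa [T, ← hy] using cell_mem_Icc (j := 1) (by simpa using hxy.le)
  refine ⟨U, isOpen_biUnion fun p _ => isOpen_thickening, fun x hx => ?_, ?_⟩
  · obtain ⟨k, hk⟩ := hS x hx
    exact mem_biUnion hk (self_subset_thickening (by positivity) _ rfl)
  · calc (dyadicCubes ι).content (fun p => w p.1) U
        ≤ ∑' p : ⋃ p ∈ S, (T p : Set (ℕ × (ι → ℤ))), w p.1.1 :=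
          NestedPartitions.content_le_tsum hcov
      _ ≤ ∑' p : S, ∑' q : (T p : Set (ℕ × (ι → ℤ))), w q.1.1 :=
          ENNReal.tsum_biUnion_le_tsum (fun q : ℕ × (ι → ℤ) => w q.1) S _
      _ = ∑' p : S, 3 ^ Fintype.card ι * w p.1.1 := by
          refine tsum_congr fun p => ?_
          have hcard := card_Icc_sub_add p.1.2 1
          rw [Nat.cast_one] at hcard
          rw [Finset.tsum_subtype' (T p) fun q => w q.1]
          simp [T, hcard]
      _ = 3 ^ Fintype.card ι * ∑' p : S, w p.1.1 := ENNReal.tsum_mul_left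

theorem ediam_cell_le (k : ℕ) (c : ι → ℤ) :
    ediam {x | (dyadicCubes ι).cell k x = c} ≤ 2⁻¹ ^ k := by
  refine ediam_le fun x hx y hy => ?_
  have hxy : (dyadicCubes ι).cell k x = (dyadicCubes ι).cell k y := hx.trans hy.symm
  refine edist_pi_le_iff.2 fun i => ?_
  have hi := (Int.abs_sub_lt_one_of_floor_eq_floor (congrFun hxy i)).le
  rw [← mul_sub, abs_mul, abs_of_pos (by positivity), ← le_div_iff₀' (by positivity)] at hi
  rw [edist_dist, Real.dist_eq]
  refine (ENNReal.ofReal_le_ofReal hi).trans_eq ?_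
  rw [one_div, ENNReal.ofReal_inv_of_pos (by positivity), ENNReal.ofReal_pow two_pos.le,
    ENNReal.inv_pow, ENNReal.ofReal_ofNat]

theorem hausdorffMeasure_eq_zero_of_content_eq_zero {t : ℝ} (ht : 0 < t) {B : Set (ι → ℝ)}
    (h : (dyadicCubes ι).content (fun p => ((2⁻¹ : ℝ≥0∞) ^ p.1) ^ t) B = 0) : μH[t] B = 0 := by
  let ε : ℕ → ℝ≥0∞ := fun n => ((n : ℝ≥0∞) + 1)⁻¹
  have hε : ∀ n, 0 < ε n := fun n => ENNReal.inv_pos.2 (by finiteness)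
  have hεlim : Filter.Tendsto ε Filter.atTop (nhds 0) := by
    simpa [ε] using (Filter.tendsto_add_atTop_iff_nat 1).2 ENNReal.tendsto_inv_nat_nhds_zero
  choose S hS hcost using fun n => NestedPartitions.exists_covers_tsum_lt (h ▸ hε n)
  have hdiam : ∀ n (p : S n), ediam {x | (dyadicCubes ι).cell p.1.1 x = p.1.2} ^ t ≤
      ((2⁻¹ : ℝ≥0∞) ^ p.1.1) ^ t := fun n p => ENNReal.rpow_le_rpow (ediam_cell_le _ _) ht.le
  have hle := Measure.hausdorffMeasure_le_liminf_tsum t B (l := Filter.atTop)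
    (fun n => ε n ^ t⁻¹)
    (by simpa [ht] using hεlim.ennrpow_const t⁻¹)
    (fun n (p : S n) => {x | (dyadicCubes ι).cell p.1.1 x = p.1.2})
    (.of_forall fun n p => (ENNReal.le_rpow_inv_iff ht).2 <|
      (hdiam n p).trans <| (ENNReal.le_tsum p).trans (hcost n).le)
    (.of_forall fun n x hx => by
      obtain ⟨k, hk⟩ := hS n x hx
      exact mem_iUnion.2 ⟨⟨_, hk⟩, rfl⟩)
  refine le_antisymm (hle.trans ?_) zero_le
  rw [← hεlim.liminf_eq]
  exact Filter.liminf_le_liminf (.of_forall fun n =>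
    (ENNReal.tsum_le_tsum (hdiam n)).trans (hcost n).le)

end dyadicCubes

namespace dyadicCubes

variable {ι : Type*} {w : ℕ → ℝ≥0∞}

theorem exists_isCompact_content_ne_zero [Finite ι] {B : Set (ι → ℝ)} (hB : AnalyticSet B)
    (h : (dyadicCubes ι).content (fun p => w p.1) B ≠ 0) :
    ∃ K ⊆ B, IsCompact K ∧ (dyadicCubes ι).content (fun p => w p.1) K ≠ 0 := by
  cases nonempty_fintype ι
  obtain ⟨c, hc0, hcB⟩ := exists_between (pos_iff_ne_zero.2 h)
  obtain ⟨K, hKB, hK, hcK⟩ := exists_isCompact_forall_isOpen_le_of_analyticSet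
    (fun _ _ => NestedPartitions.content_mono) (fun _ => NestedPartitions.content_iUnion_le) hB hcB
  refine ⟨K, hKB, hK, fun h0 => ?_⟩
  obtain ⟨S, hS, hSlt⟩ := NestedPartitions.exists_covers_tsum_lt
    (h0.trans_lt (ENNReal.div_pos hc0.ne' (by finiteness : (3 : ℝ≥0∞) ^ Fintype.card ι ≠ ∞)))
  obtain ⟨U, hU, hKU, hUle⟩ := exists_isOpen_content_le w hS
  rw [ENNReal.lt_div_iff_mul_lt (by simp) (by simp), mul_comm] at hSlt
  exact (((hcK U hU hKU).trans hUle).trans_lt hSlt).false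

theorem exists_measure_closedBall_le [Fintype ι] (hw : w 0 ≠ ∞) {K : Set (ι → ℝ)} (hK : IsCompact K)
    (h : (dyadicCubes ι).content (fun p => w p.1) K ≠ 0) :
    ∃ μ : Measure (ι → ℝ), IsFiniteMeasure μ ∧ μ ≠ 0 ∧ μ Kᶜ = 0 ∧
      ∀ x (k : ℕ), μ (closedBall x ((1 / 2) ^ k)) ≤ 5 ^ Fintype.card ι * w k := by
  classical
  have : CompactSpace K := isCompact_iff_compactSpace.1 hK
  have hfin : fractionalCost (fun p : ℕ × (ι → ℤ) => {x : K | (dyadicCubes ι).cell p.1 x = p.2})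
      (fun p => w p.1) 1 ≠ ∞ := by
    obtain ⟨R, hR⟩ := hK.isBounded.subset_closedBall 0
    let c := (dyadicCubes ι).cell 0 0
    refine ((fractionalCost_le_sum ({0} ×ˢ Finset.Icc (c - ⌈R⌉₊) (c + ⌈R⌉₊))
      (fun _ => le_rfl) fun x _ => ?_).trans_lt (ENNReal.sum_lt_top.2 fun p hp => ?_)).ne
    · refine ⟨(0, (dyadicCubes ι).cell 0 x), ?_, rfl⟩
      simpa using cell_mem_Icc (k := 0) (by simpa using (hR x.2).trans (Nat.le_ceil R))
    · rw [Finset.mem_singleton.1 (Finset.mem_product.1 hp).1]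
      exact hw.lt_top
  obtain ⟨μ, hμuniv, hμ⟩ := exists_measure_of_fractionalCost hfin
  have hmap {S : Set (ι → ℝ)} (hS : MeasurableSet S) :
      μ.map Subtype.val S = μ (Subtype.val ⁻¹' S) := μ.map_apply measurable_subtype_coe hS
  refine ⟨μ.map Subtype.val, ⟨?_⟩, fun h0 => h ?_, ?_, fun x k => ?_⟩
  · rw [hmap .univ, preimage_univ, hμuniv]
    exact hfin.lt_top
  · refine le_antisymm (((dyadicCubes ι).content_le_fractionalCost _ K).trans_eq ?_) zero_le
    rw [← hμuniv, ← preimage_univ (f := Subtype.val), ← hmap .univ, h0, Measure.coe_zero,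
      Pi.zero_apply]
  · rw [hmap hK.measurableSet.compl]
    simp
  · have hlt : (1 / 2 : ℝ) ^ k < (2 : ℕ) * (1 / 2) ^ k := by
      rw [Nat.cast_ofNat, two_mul]
      exact lt_add_of_pos_right _ (by positivity)
    let c := (dyadicCubes ι).cell k x
    rw [hmap measurableSet_closedBall]
    refine (hμ _ (Subtype.val ⁻¹' ball x ((2 : ℕ) * (1 / 2) ^ k))
      (isClosed_closedBall.preimage continuous_subtype_val).isCompact
      (isOpen_ball.preimage continuous_subtype_val) (preimage_mono (closedBall_subset_ball hlt))
      ({k} ×ˢ Finset.Icc (c - (2 : ℕ)) (c + (2 : ℕ))) fun y hy => ?_).trans_eq ?_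
    · exact mem_biUnion (x := (k, (dyadicCubes ι).cell k y)) (Finset.mem_product.2
        ⟨Finset.mem_singleton_self k, cell_mem_Icc (mem_ball.1 hy).le⟩) rfl
    · have hcard := card_Icc_sub_add c 2
      rw [Nat.cast_ofNat] at hcard
      simp [hcard]

end dyadicCubes

/-- The Frostman condition of exponent `t`. It is stated with diameters of arbitrary sets rather
than radii of balls so that it is transported by antilipschitz maps. -/
def IsFrostman {X : Type*} [PseudoEMetricSpace X] [MeasurableSpace X] (t : ℝ) (μ : Measure X) :
    Prop :=
  ∃ M : NNReal, ∀ s, μ s ≤ M * ediam s ^ t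

namespace IsFrostman

section PseudoEMetricSpace

variable {X : Type*} [PseudoEMetricSpace X] [MeasurableSpace X] {t : ℝ} {μ ν : Measure X}

theorem mono_measure (hμ : IsFrostman t μ) (hνμ : ν ≤ μ) : IsFrostman t ν :=
  hμ.imp fun _ hM s => (hνμ s).trans (hM s)

theorem measure_singleton (hμ : IsFrostman t μ) (ht : 0 < t) (x : X) : μ {x} = 0 := by
  obtain ⟨M, hM⟩ := hμ
  simpa [ht] using hM {x}

theorem map {Y : Type*} [PseudoEMetricSpace Y] [MeasurableSpace Y] {f : X → Y} {C : NNReal}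
    (hμ : IsFrostman t μ) (ht : 0 ≤ t) (hf : MeasurableEmbedding f) (hfC : AntilipschitzWith C f) :
    IsFrostman t (μ.map f) := by
  obtain ⟨M, hM⟩ := hμ
  refine ⟨M * C ^ t, fun s => ?_⟩
  rw [hf.map_apply, ENNReal.coe_mul, ENNReal.coe_rpow_of_nonneg _ ht, mul_assoc,
    ← ENNReal.mul_rpow_of_nonneg _ _ ht]
  exact (hM _).trans (by gcongr; exact hfC.ediam_preimage_le s)

end PseudoEMetricSpace

theorem of_measure_closedBall_le {X : Type*} [PseudoMetricSpace X] [MeasurableSpace X] {t : ℝ}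
    {μ : Measure X} [IsFiniteMeasure μ] (ht : 0 < t) {M : NNReal}
    (h : ∀ x (k : ℕ), μ (closedBall x ((1 / 2) ^ k)) ≤ M * ((2⁻¹ : ℝ≥0∞) ^ k) ^ t) :
    IsFrostman t μ := by
  have hsmall : ∀ (s : Set X) (r : ℝ≥0∞), ediam s < r → r < 1 → μ s ≤ M * (2 * r) ^ t := by
    intro s r hsr hr1
    lift r to NNReal using hr1.ne_top
    obtain rfl | ⟨x, hx⟩ := s.eq_empty_or_nonempty
    · simp
    obtain ⟨k, hkr, hrk⟩ := exists_nat_pow_near_of_lt_one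
      (ENNReal.coe_pos.1 (zero_le.trans_lt hsr)) (ENNReal.coe_le_one_iff.1 hr1.le)
      (by simp : (0 : NNReal) < 2⁻¹) (by norm_num)
    have hsub : s ⊆ closedBall x ((1 / 2) ^ k) := fun y hy => by
      have hyr : edist y x < r := (edist_le_ediam_of_mem hy hx).trans_lt hsr
      simpa using NNReal.coe_le_coe.2 ((edist_lt_coe.1 hyr).le.trans hrk)
    have hk2r : (2⁻¹ : NNReal) ^ k ≤ 2 * r := by
      rw [pow_succ, ← div_eq_mul_inv, div_lt_iff₀' two_pos] at hkr
      exact hkr.le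
    refine (measure_mono hsub).trans ((h x k).trans ?_)
    gcongr
    have := ENNReal.coe_le_coe.2 hk2r
    push_cast at this
    exact this
  refine ⟨M * 2 ^ t + (μ univ).toNNReal, fun s => ?_⟩
  rw [ENNReal.coe_add, ENNReal.coe_toNNReal (measure_ne_top μ univ)]
  obtain hs | hs := le_or_gt 1 (ediam s)
  · calc μ s ≤ μ univ * 1 := by simpa using measure_mono s.subset_univ
      _ ≤ _ := mul_le_mul' le_add_self (ENNReal.one_le_rpow hs ht)
  · have : (nhdsWithin (ediam s) (Ioi (ediam s))).NeBot := nhdsGT_neBot_of_exists_gt ⟨1, hs⟩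
    have hlim : Filter.Tendsto (fun r : ℝ≥0∞ => M * (2 * r) ^ t)
        (nhdsWithin (ediam s) (Ioi (ediam s))) (nhds (M * (2 * ediam s) ^ t)) :=
      ((ENNReal.continuous_const_mul ENNReal.coe_ne_top).comp <| ENNReal.continuous_rpow_const.comp
        (ENNReal.continuous_const_mul ENNReal.ofNat_ne_top)).continuousWithinAt
    calc μ s ≤ M * (2 * ediam s) ^ t := ge_of_tendsto hlim <|
          Filter.eventually_of_mem (Ioo_mem_nhdsGT hs) fun r hr => hsmall s r hr.1 hr.2
      _ = M * 2 ^ t * ediam s ^ t := by rw [ENNReal.mul_rpow_of_nonneg _ _ ht.le, mul_assoc]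
      _ ≤ _ := by
        gcongr
        rw [ENNReal.coe_mul, ENNReal.coe_rpow_of_nonneg _ ht.le]
        exact le_self_add

theorem exists_of_hausdorffMeasure_ne_zero {ι : Type*} [Fintype ι] {B : Set (ι → ℝ)}
    (hB : AnalyticSet B) {t : ℝ} (ht : 0 < t) (h : μH[t] B ≠ 0) :
    ∃ K ⊆ B, IsCompact K ∧ ∃ μ : Measure (ι → ℝ), IsFiniteMeasure μ ∧ μ ≠ 0 ∧ μ Kᶜ = 0 ∧
      IsFrostman t μ := by
  obtain ⟨K, hKB, hK, hK0⟩ := dyadicCubes.exists_isCompact_content_ne_zero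
    (w := fun k => (2⁻¹ ^ k) ^ t) hB
    (mt (dyadicCubes.hausdorffMeasure_eq_zero_of_content_eq_zero ht) h)
  obtain ⟨μ, hμfin, hμ0, hμK, hμ⟩ :=
    dyadicCubes.exists_measure_closedBall_le (w := fun k => (2⁻¹ ^ k) ^ t) (by simp) hK hK0
  exact ⟨K, hKB, hK, μ, hμfin, hμ0, hμK,
    of_measure_closedBall_le ht (M := 5 ^ Fintype.card ι) (by simpa using hμ)⟩

theorem exists_of_lt_dimH {E : Type*} [NormedAddCommGroup E] [NormedSpace ℝ E]
    [FiniteDimensional ℝ E] [MeasurableSpace E] [BorelSpace E] {B : Set E} (hB : AnalyticSet B)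
    {s : NNReal} (h : s < dimH B) :
    ∃ t > (s : ℝ), ∃ K ⊆ B, IsCompact K ∧ ∃ μ : Measure E, IsFiniteMeasure μ ∧ μ ≠ 0 ∧
      μ Kᶜ = 0 ∧ IsFrostman t μ := by
  obtain ⟨t, hst, htB⟩ := ENNReal.lt_iff_exists_nnreal_btwn.1 h
  have hst' : (s : ℝ) < t := NNReal.coe_lt_coe.2 (ENNReal.coe_lt_coe.1 hst)
  have ht : (0 : ℝ) < t := s.coe_nonneg.trans_lt hst'
  let e : E ≃L[ℝ] (Fin (Module.finrank ℝ E) → ℝ) := ContinuousLinearEquiv.ofFinrankEq (by simp)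
  have hdim : μH[t] (e '' B) ≠ 0 := by
    rw [← e.dimH_image] at htB
    rw [hausdorffMeasure_of_lt_dimH htB]
    exact ENNReal.top_ne_zero
  obtain ⟨K, hKB, hK, μ, hμfin, hμ0, hμK, hμ⟩ :=
    exists_of_hausdorffMeasure_ne_zero (hB.image_of_continuous e.continuous) ht hdim
  refine ⟨t, hst', e.symm '' K, ?_, hK.image e.symm.continuous, μ.map e.symm, inferInstance, ?_, ?_,
    hμ.map ht.le e.symm.toHomeomorph.measurableEmbedding e.symm.antilipschitz⟩
  · rw [image_subset_iff]
    rintro _ hy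
    obtain ⟨x, hx, rfl⟩ := hKB hy
    simpa using hx
  · rwa [Ne, Measure.map_eq_zero_iff e.symm.continuous.aemeasurable]
  · rw [Measure.map_apply e.symm.continuous.measurable
      (hK.image e.symm.continuous).measurableSet.compl, preimage_compl,
      preimage_image_eq _ e.symm.injective, hμK]

end IsFrostman

/-- The Riesz potential of order `s` of `μ`. For `0 < s` the kernel is `∞` on the diagonal, because
`0 ^ (-s) = ∞` in `ℝ≥0∞`. -/
noncomputable def rieszPotential {X : Type*} [EDist X] [MeasurableSpace X] (s : ℝ) (μ : Measure X)
    (x : X) : ℝ≥0∞ :=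
  ∫⁻ y, edist x y ^ (-s) ∂μ

section RieszPotential

variable {X : Type*} [EMetricSpace X] {s t : ℝ}

theorem edist_rpow_neg_le_tsum (hs : 0 ≤ s) {x y : X} (hxy : y ≠ x) :
    edist x y ^ (-s) ≤
      1 + ∑' k : ℕ, (closedEBall x (2⁻¹ ^ k)).indicator
        (fun _ => (2 : ℝ≥0∞) ^ s * (2 ^ s) ^ k) y := by
  rw [edist_comm, ENNReal.rpow_neg]
  obtain h1 | h1 := le_or_gt 1 (edist y x)
  · refine le_add_right (ENNReal.inv_le_one.2 ?_)
    simpa using ENNReal.rpow_le_rpow h1 hs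
  obtain ⟨d, hd⟩ : ∃ d : NNReal, edist y x = d := ⟨_, (ENNReal.coe_toNNReal h1.ne_top).symm⟩
  have hd0 : 0 < d := ENNReal.coe_pos.1 (hd ▸ edist_pos.2 hxy)
  have hd1 : d ≤ 1 := ENNReal.coe_le_one_iff.1 (hd ▸ h1.le)
  obtain ⟨k, hkd, hdk⟩ := exists_nat_pow_near_of_lt_one hd0 hd1
    (by simp : (0 : NNReal) < 2⁻¹) (by norm_num)
  have hmem : y ∈ closedEBall x (2⁻¹ ^ k) := by
    rw [mem_closedEBall, hd]
    have := ENNReal.coe_le_coe.2 hdk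
    push_cast at this
    exact this
  refine le_add_left (le_trans ?_ (ENNReal.le_tsum k))
  have hpow : ((2 : ℝ≥0∞) ^ s) ^ (k + 1) = (2 ^ (k + 1)) ^ s := by
    simp_rw [← ENNReal.rpow_natCast, ← ENNReal.rpow_mul, mul_comm]
  rw [indicator_of_mem hmem, hd, ← pow_succ', ENNReal.inv_le_iff_inv_le, hpow, ← ENNReal.inv_rpow,
    ENNReal.inv_pow]
  gcongr
  have := ENNReal.coe_le_coe.2 hkd.le
  push_cast at this
  exact this

variable [MeasurableSpace X] {μ : Measure X}

theorem IsFrostman.measure_closedEBall_le (hμ : IsFrostman t μ) (ht : 0 ≤ t) :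
    ∃ M : NNReal, ∀ x r, μ (closedEBall x r) ≤ M * r ^ t := by
  obtain ⟨M, hM⟩ := hμ
  refine ⟨M * 2 ^ t, fun x r => (hM _).trans ?_⟩
  rw [ENNReal.coe_mul, ENNReal.coe_rpow_of_nonneg _ ht, mul_assoc, ENNReal.coe_ofNat,
    ← ENNReal.mul_rpow_of_nonneg _ _ ht]
  gcongr
  exact ediam_closedEBall_le

theorem IsFrostman.exists_rieszPotential_le [OpensMeasurableSpace X] [IsFiniteMeasure μ]
    (hμ : IsFrostman t μ) (hs : 0 ≤ s) (hst : s < t) :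
    ∃ C : NNReal, ∀ x, rieszPotential s μ x ≤ C := by
  have ht : 0 < t := hs.trans_lt hst
  obtain ⟨M, hM⟩ := hμ.measure_closedEBall_le ht.le
  let D := μ univ + ∑' k : ℕ, (2 : ℝ≥0∞) ^ s * M * (2 ^ (s - t)) ^ k
  have hD : D ≠ ∞ := by
    unfold D
    rw [ENNReal.tsum_mul_left, ENNReal.tsum_geometric]
    have : (2 : ℝ≥0∞) ^ (s - t) < 1 :=
      ENNReal.rpow_lt_one_of_one_lt_of_neg ENNReal.one_lt_two (sub_neg.2 hst)
    have := ENNReal.inv_ne_top.2 (tsub_pos_of_lt this).ne'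
    finiteness
  have hterm : ∀ x (k : ℕ), (2 : ℝ≥0∞) ^ s * (2 ^ s) ^ k * μ (closedEBall x (2⁻¹ ^ k)) ≤
      2 ^ s * M * (2 ^ (s - t)) ^ k := by
    intro x k
    have hpow : ((2⁻¹ : ℝ≥0∞) ^ k) ^ t = (2 ^ (-t)) ^ k := by
      simp_rw [ENNReal.rpow_neg, ← ENNReal.inv_rpow, ← ENNReal.rpow_natCast, ← ENNReal.rpow_mul,
        mul_comm]
    calc (2 : ℝ≥0∞) ^ s * (2 ^ s) ^ k * μ (closedEBall x (2⁻¹ ^ k))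
        ≤ 2 ^ s * (2 ^ s) ^ k * (M * (2⁻¹ ^ k) ^ t) := by gcongr; exact hM _ _
      _ = 2 ^ s * M * (2 ^ s * 2 ^ (-t)) ^ k := by rw [hpow, mul_pow]; ring
      _ = 2 ^ s * M * (2 ^ (s - t)) ^ k := by
        rw [← ENNReal.rpow_add _ _ two_ne_zero ENNReal.ofNat_ne_top, sub_eq_add_neg]
  refine ⟨D.toNNReal, fun x => ?_⟩
  rw [ENNReal.coe_toNNReal hD]
  calc rieszPotential s μ x
      ≤ ∫⁻ y, 1 + ∑' k : ℕ, (closedEBall x (2⁻¹ ^ k)).indicator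
          (fun _ => (2 : ℝ≥0∞) ^ s * (2 ^ s) ^ k) y ∂μ :=
        lintegral_mono_ae <| Filter.mem_of_superset
          (compl_mem_ae_iff.2 (hμ.measure_singleton ht x)) fun y => edist_rpow_neg_le_tsum hs
    _ = μ univ + ∑' k : ℕ, (2 : ℝ≥0∞) ^ s * (2 ^ s) ^ k * μ (closedEBall x (2⁻¹ ^ k)) := by
        rw [lintegral_add_left measurable_const, lintegral_one, lintegral_tsum fun k =>
          (measurable_const.indicator isClosed_closedEBall.measurableSet).aemeasurable]
        simp_rw [lintegral_indicator_const isClosed_closedEBall.measurableSet]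
    _ ≤ D := add_le_add le_rfl (ENNReal.tsum_le_tsum (hterm x))

end RieszPotential

section SquareIntegrable

theorem sq_lintegral_mul_le {X : Type*} [MeasurableSpace X] {β : Measure X} {f g : X → ℝ≥0∞}
    (hf : AEMeasurable f β) (hg : AEMeasurable g β) :
    (∫⁻ p, f p * g p ∂β) ^ 2 ≤ (∫⁻ p, f p ^ 2 ∂β) * ∫⁻ p, g p ^ 2 ∂β := by
  have h := ENNReal.lintegral_mul_le_Lp_mul_Lq β Real.HolderConjugate.two_two hf hg
  simp_rw [ENNReal.rpow_two, Pi.mul_apply] at h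
  rw [← ENNReal.mul_rpow_of_nonneg _ _ (by norm_num)] at h
  refine (pow_le_pow_left₀ zero_le h 2).trans_eq ?_
  rw [← ENNReal.rpow_two, ← ENNReal.rpow_mul, one_div_mul_cancel two_ne_zero, ENNReal.rpow_one]

theorem sq_lintegral_le_of_lowerSemicontinuous {X : Type*} [TopologicalSpace X]
    [MeasurableSpace X] [BorelSpace X] {Φ β : Measure X} [β.WeaklyRegular] {C : ℝ≥0∞} (hC : C ≠ ∞)
    (h : ∀ f : X → ℝ≥0∞, LowerSemicontinuous f →
      (∫⁻ p, f p ∂Φ) ^ 2 ≤ C * ∫⁻ p, f p ^ 2 ∂β)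
    {f : X → ℝ≥0∞} (hf : Measurable f) :
    (∫⁻ p, f p ∂Φ) ^ 2 ≤ C * ∫⁻ p, f p ^ 2 ∂β := by
  have hsqrt (u : ℝ≥0∞) : (u ^ (1 / 2 : ℝ)) ^ 2 = u := by
    rw [← ENNReal.rpow_two, ← ENNReal.rpow_mul, one_div_mul_cancel two_ne_zero, ENNReal.rpow_one]
  have hle : ∀ ε : ℝ≥0∞, ε ≠ 0 → (∫⁻ p, f p ∂Φ) ^ 2 ≤ C * (∫⁻ p, f p ^ 2 ∂β + ε) := by
    intro ε hε
    obtain ⟨g, hfg, hg, hgi⟩ :=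
      exists_le_lowerSemicontinuous_lintegral_ge β (fun p => f p ^ 2) (hf.pow_const _) hε
    have hg' : LowerSemicontinuous fun p => g p ^ (1 / 2 : ℝ) :=
      (ENNReal.continuous_rpow_const (y := 1 / 2)).comp_lowerSemicontinuous hg
        (ENNReal.monotone_rpow_of_nonneg (by norm_num))
    have hfg' (p : X) : f p ≤ g p ^ (1 / 2 : ℝ) :=
      (ENNReal.pow_le_pow_left_iff two_ne_zero).1 ((hfg p).trans_eq (hsqrt _).symm)
    calc (∫⁻ p, f p ∂Φ) ^ 2 ≤ (∫⁻ p, g p ^ (1 / 2 : ℝ) ∂Φ) ^ 2 := by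
          gcongr with p
          exact hfg' p
      _ ≤ C * ∫⁻ p, (g p ^ (1 / 2 : ℝ)) ^ 2 ∂β := h _ hg'
      _ ≤ C * (∫⁻ p, f p ^ 2 ∂β + ε) := by
          simp_rw [hsqrt]
          gcongr
  have hlim : Filter.Tendsto (fun ε : ℝ≥0∞ => C * (∫⁻ p, f p ^ 2 ∂β + ε)) (nhdsWithin 0 (Ioi 0))
      (nhds (C * (∫⁻ p, f p ^ 2 ∂β + 0))) :=
    ((ENNReal.continuous_const_mul hC).comp (continuous_const_add _)).continuousWithinAt
  rw [add_zero] at hlim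
  exact ge_of_tendsto hlim (Filter.eventually_of_mem self_mem_nhdsWithin fun ε hε => hle ε hε.ne')

variable {X : Type*} [MeasurableSpace X] {Φ β : Measure X} {C : ℝ≥0∞}

theorem absolutelyContinuous_of_sq_lintegral_le
    (h : ∀ f : X → ℝ≥0∞, Measurable f → (∫⁻ p, f p ∂Φ) ^ 2 ≤ C * ∫⁻ p, f p ^ 2 ∂β) : Φ ≪ β := by
  refine Measure.AbsolutelyContinuous.mk fun s hs hβ => ?_
  have hind : ∫⁻ p, s.indicator (1 : X → ℝ≥0∞) p ^ 2 ∂β = 0 := by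
    rw [← nonpos_iff_eq_zero, ← hβ, ← lintegral_indicator_one hs]
    exact lintegral_mono fun p =>
      pow_le_of_le_one zero_le (indicator_le_self' (by simp) p) two_ne_zero
  have hs2 := h (s.indicator 1) (measurable_one.indicator hs)
  rw [lintegral_indicator_one hs, hind, mul_zero] at hs2
  exact eq_zero_of_pow_eq_zero (nonpos_iff_eq_zero.1 hs2)

theorem lintegral_rnDeriv_le [IsFiniteMeasure Φ] [SigmaFinite β]
    (h : ∀ f : X → ℝ≥0∞, Measurable f → (∫⁻ p, f p ∂Φ) ^ 2 ≤ C * ∫⁻ p, f p ^ 2 ∂β) :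
    ∫⁻ p, Φ.rnDeriv β p ∂Φ ≤ C := by
  have hg := Measure.measurable_rnDeriv Φ β
  set g := Φ.rnDeriv β
  have htrunc : ∀ N : ℕ, ∫⁻ p, min (g p) N ∂Φ ≤ C := by
    intro N
    have hm : Measurable fun p => min (g p) (N : ℝ≥0∞) := hg.min measurable_const
    set I := ∫⁻ p, min (g p) (N : ℝ≥0∞) ∂Φ
    have hI_top : I ≠ ∞ := by
      refine ne_top_of_le_ne_top ?_ (lintegral_mono fun p => min_le_right (g p) N)
      rw [lintegral_const]
      finiteness
    have hI_sq : I * I ≤ C * I := calc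
      I * I ≤ C * ∫⁻ p, min (g p) N ^ 2 ∂β := sq I ▸ h _ hm
      _ ≤ C * ∫⁻ p, g p * min (g p) N ∂β := by
        gcongr with p
        rw [sq]
        gcongr
        exact min_le_left _ _
      _ = C * I := by
        rw [lintegral_rnDeriv_mul (absolutelyContinuous_of_sq_lintegral_le h) hm.aemeasurable]
    obtain h0 | h0 := eq_or_ne I 0
    · exact h0.trans_le zero_le
    · exact (ENNReal.mul_le_mul_iff_left h0 hI_top).1 hI_sq
  have hsup : ∀ p, g p = ⨆ N : ℕ, min (g p) (N : ℝ≥0∞) := fun p => by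
    rw [← inf_iSup_eq, ENNReal.iSup_natCast, inf_top_eq]
  rw [lintegral_congr hsup, lintegral_iSup (fun N => hg.min measurable_const)
    fun N N' hN p => by dsimp; gcongr]
  exact iSup_le htrunc

theorem exists_sq_lintegral_le_mul_measure [IsFiniteMeasure Φ] [SigmaFinite β] (hC : C ≠ ∞)
    (h : ∀ f : X → ℝ≥0∞, Measurable f → (∫⁻ p, f p ∂Φ) ^ 2 ≤ C * ∫⁻ p, f p ^ 2 ∂β) :
    ∃ κ : Measure X, IsFiniteMeasure κ ∧ κ ≪ Φ ∧ ∀ s, MeasurableSet s →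
      ∀ f : X → ℝ≥0∞, Measurable f → (∀ᵐ p ∂β, f p ≠ 0 → p ∈ s) →
        (∫⁻ p, f p ∂Φ) ^ 2 ≤ (∫⁻ p, f p ^ 2 ∂β) * κ s := by
  have hg := Measure.measurable_rnDeriv Φ β
  have hfinite : IsFiniteMeasure (Φ.withDensity (Φ.rnDeriv β)) :=
    isFiniteMeasure_withDensity (ne_top_of_le_ne_top hC (lintegral_rnDeriv_le h))
  refine ⟨Φ.withDensity (Φ.rnDeriv β), hfinite, withDensity_absolutelyContinuous _ _,
    fun s hs f hf hfs => ?_⟩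
  have hΦβ := absolutelyContinuous_of_sq_lintegral_le h
  set g := Φ.rnDeriv β
  have hgs : Measurable (s.indicator g) := hg.indicator hs
  calc (∫⁻ p, f p ∂Φ) ^ 2 = (∫⁻ p, f p * s.indicator g p ∂β) ^ 2 := by
        rw [← lintegral_rnDeriv_mul hΦβ hf.aemeasurable]
        congr 1
        refine lintegral_congr_ae (hfs.mono fun p hp => ?_)
        by_cases hps : p ∈ s
        · simp only [indicator_of_mem hps, g, mul_comm]
        · simp [of_not_not (mt hp hps)]
    _ ≤ (∫⁻ p, f p ^ 2 ∂β) * ∫⁻ p, s.indicator g p ^ 2 ∂β :=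
        sq_lintegral_mul_le hf.aemeasurable hgs.aemeasurable
    _ = (∫⁻ p, f p ^ 2 ∂β) * Φ.withDensity g s := by
        rw [withDensity_apply _ hs, ← lintegral_indicator hs,
          ← lintegral_rnDeriv_mul hΦβ hgs.aemeasurable]
        congr 1
        refine lintegral_congr fun p => ?_
        by_cases hps : p ∈ s <;> simp [hps, g, sq]

end SquareIntegrable

theorem le_liminf_setLAverage_closedBall {X α : Type*} [PseudoMetricSpace X] [ProperSpace X]
    [MeasurableSpace X] [OpensMeasurableSpace X] {η : Measure X} [η.IsOpenPosMeasure]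
    [IsFiniteMeasureOnCompacts η] {g : X → ℝ≥0∞} {u : X} (hg : LowerSemicontinuousAt g u)
    {l : Filter α} {δ : α → ℝ} (hδ : Filter.Tendsto δ l (nhdsWithin 0 (Ioi 0))) :
    g u ≤ l.liminf fun k => ⨍⁻ w in closedBall u (δ k), g w ∂η := by
  refine le_of_forall_lt fun c hc => ?_
  obtain ⟨c', hcc', hc'⟩ := exists_between hc
  refine hcc'.trans_le (Filter.le_liminf_of_le (by isBoundedDefault) ?_)
  obtain ⟨ε, hε, hball⟩ := Metric.eventually_nhds_iff.1 (hg c' hc')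
  filter_upwards [hδ (Ioo_mem_nhdsGT hε)] with k hk
  have hpos := (measure_closedBall_pos η u hk.1).ne'
  calc c' = ⨍⁻ _ in closedBall u (δ k), c' ∂η :=
        (setLAverage_const hpos measure_closedBall_lt_top.ne c').symm
    _ ≤ ⨍⁻ w in closedBall u (δ k), g w ∂η := by
        rw [setLAverage_eq, setLAverage_eq]
        exact ENNReal.div_le_div_right (setLIntegral_mono' measurableSet_closedBall fun w hw =>
          (hball (lt_of_le_of_lt hw hk.2)).le) _

section Fubini

variable {A W X : Type*} [MeasurableSpace A] [MeasurableSpace W] [MeasurableSpace X]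
  {τ : Measure A} {η : Measure W} {μ : Measure X}

theorem lintegral_measure_prodMk_sq [SFinite τ] [SFinite μ] {S : Set (A × X)}
    (hS : MeasurableSet S) :
    ∫⁻ p, μ (Prod.mk p ⁻¹' S) ^ 2 ∂τ = ∫⁻ x, ∫⁻ y, τ {p | (p, x) ∈ S ∧ (p, y) ∈ S} ∂μ ∂μ := by
  have hT : MeasurableSet {q : A × X × X | (q.1, q.2.1) ∈ S ∧ (q.1, q.2.2) ∈ S} :=
    (hS.preimage (by fun_prop)).inter (hS.preimage (by fun_prop))
  calc ∫⁻ p, μ (Prod.mk p ⁻¹' S) ^ 2 ∂τ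
      = ∫⁻ p, μ.prod μ (Prod.mk p ⁻¹' {q | (q.1, q.2.1) ∈ S ∧ (q.1, q.2.2) ∈ S}) ∂τ := by
        simp_rw [sq, ← Measure.prod_prod]
        rfl
    _ = ∫⁻ q, τ ((fun p => (p, q)) ⁻¹' {q | (q.1, q.2.1) ∈ S ∧ (q.1, q.2.2) ∈ S}) ∂μ.prod μ := by
        rw [← Measure.prod_apply hT, Measure.prod_apply_symm hT]
    _ = _ := lintegral_prod _ (measurable_measure_prodMk_right hT).aemeasurable

variable [SFinite η]

theorem measurable_setLIntegral_prodMk {S : Set ((A × W) × X)} (hS : MeasurableSet S)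
    {f : A × W → ℝ≥0∞} (hf : Measurable f) :
    Measurable fun q : A × X => ∫⁻ w in {w | ((q.1, w), q.2) ∈ S}, f (q.1, w) ∂η := by
  have hG : Measurable (S.indicator fun s => f s.1) := (hf.comp measurable_fst).indicator hS
  convert (hG.comp (by fun_prop : Measurable fun s : (A × X) × W =>
    ((s.1.1, s.2), s.1.2))).lintegral_prod_right' (ν := η) using 2 with q
  exact (lintegral_indicator (hS.preimage (by fun_prop)) _).symm

theorem lintegral_setLIntegral_prodMk [SFinite μ] {S : Set ((A × W) × X)} (hS : MeasurableSet S)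
    {f : A × W → ℝ≥0∞} (hf : Measurable f) :
    ∫⁻ q, ∫⁻ w in {w | ((q.1, w), q.2) ∈ S}, f (q.1, w) ∂η ∂τ.prod μ =
      ∫⁻ p, f p * μ (Prod.mk p ⁻¹' S) ∂τ.prod η := by
  let G : (A × W) × X → ℝ≥0∞ := S.indicator fun s => f s.1
  have hG : Measurable G := (hf.comp measurable_fst).indicator hS
  calc ∫⁻ q, ∫⁻ w in {w | ((q.1, w), q.2) ∈ S}, f (q.1, w) ∂η ∂τ.prod μ
      = ∫⁻ q, ∫⁻ w, G ((q.1, w), q.2) ∂η ∂τ.prod μ :=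
        lintegral_congr fun q => (lintegral_indicator (hS.preimage (by fun_prop)) _).symm
    _ = ∫⁻ a, ∫⁻ x, ∫⁻ w, G ((a, w), x) ∂η ∂μ ∂τ := by
        refine lintegral_prod _ (Measurable.lintegral_prod_right' (f := fun s : (A × X) × W =>
          G ((s.1.1, s.2), s.1.2)) (by fun_prop)).aemeasurable
    _ = ∫⁻ a, ∫⁻ w, ∫⁻ x, G ((a, w), x) ∂μ ∂η ∂τ :=
        lintegral_congr fun a => lintegral_lintegral_swap
          (hG.comp (by fun_prop : Measurable fun s : X × W => ((a, s.2), s.1))).aemeasurable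
    _ = ∫⁻ p, ∫⁻ x, G (p, x) ∂μ ∂τ.prod η :=
        (lintegral_prod _ hG.lintegral_prod_right'.aemeasurable).symm
    _ = ∫⁻ p, f p * μ (Prod.mk p ⁻¹' S) ∂τ.prod η :=
        lintegral_congr fun p =>
          lintegral_indicator_const (measurable_prodMk_left hS) (f p)

end Fubini

section Shear

variable {V : Type*} [NormedAddCommGroup V] [NormedSpace ℝ V]

/-- The intercept at height `0` of the line of `ℝ × V` through `x` with slope `a`, that is, with
direction `(1, a)`. A pair `(a, b) : V × V` thus encodes the line `{x | shear a x = b}`, and every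
line that is not horizontal arises in this way. -/
def shear (a : V) (x : ℝ × V) : V := x.2 - x.1 • a

/-- The closed `δ`-tube around the line with slope `p.1` and intercept `p.2`, with distances
measured along the horizontal slices `{s} × V`. -/
def tube (δ : ℝ) (p : V × V) : Set (ℝ × V) := {x | ‖shear p.1 x - p.2‖ ≤ δ}

@[fun_prop]
theorem continuous_shear : Continuous fun q : V × (ℝ × V) => shear q.1 q.2 := by
  unfold shear
  fun_prop

theorem shear_sub (a : V) (x y : ℝ × V) : shear a (x - y) = shear a x - shear a y := by
  simp only [shear, Prod.fst_sub, Prod.snd_sub, sub_smul]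
  abel

theorem isClosed_setOf_mem_tube (δ : ℝ) : IsClosed {s : (V × V) × (ℝ × V) | s.2 ∈ tube δ s.1} :=
  isClosed_le (f := fun s : (V × V) × (ℝ × V) => ‖shear s.1.1 s.2 - s.1.2‖) (by fun_prop)
    continuous_const

/-- The slopes of norm at most `R` of the lines through `0` that pass within horizontal distance
`δ` of `z`. -/
def nearSlopes (R δ : ℝ) (z : ℝ × V) : Set V := {a ∈ closedBall 0 R | ‖shear a z‖ ≤ δ}

theorem norm_mul_norm_sub_le_of_mem_nearSlopes {R δ : ℝ} {z : ℝ × V} {a b : V}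
    (ha : a ∈ nearSlopes R δ z) (hb : b ∈ nearSlopes R δ z) : ‖z‖ * ‖a - b‖ ≤ 4 * (1 + R) * δ := by
  obtain ⟨haR, ha⟩ := ha
  obtain ⟨hbR, hb⟩ := hb
  rw [mem_closedBall_zero_iff] at haR hbR
  have hR : 0 ≤ R := (norm_nonneg a).trans haR
  have hz : ‖z‖ ≤ δ + |z.1| * (1 + R) := by
    have h2 : ‖z.2‖ ≤ δ + |z.1| * R := calc
      ‖z.2‖ = ‖shear a z + z.1 • a‖ := by simp [shear]
      _ ≤ ‖shear a z‖ + ‖z.1 • a‖ := norm_add_le _ _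
      _ ≤ δ + |z.1| * R := by rw [norm_smul, Real.norm_eq_abs]; gcongr
    have hδ : 0 ≤ δ := (norm_nonneg _).trans ha
    exact norm_prod_le_iff.2 ⟨by rw [Real.norm_eq_abs]; nlinarith [abs_nonneg z.1],
      by nlinarith [abs_nonneg z.1]⟩
  have hab : ‖a - b‖ ≤ 2 * R := by linarith [norm_sub_le a b]
  have hzab : |z.1| * ‖a - b‖ ≤ 2 * δ := calc
    |z.1| * ‖a - b‖ = ‖shear b z - shear a z‖ := by
      rw [← Real.norm_eq_abs, ← norm_smul, shear, shear, smul_sub]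
      congr 1
      abel
    _ ≤ 2 * δ := by linarith [norm_sub_le (shear b z) (shear a z)]
  calc ‖z‖ * ‖a - b‖ ≤ (δ + |z.1| * (1 + R)) * ‖a - b‖ := by gcongr
    _ = δ * ‖a - b‖ + (1 + R) * (|z.1| * ‖a - b‖) := by ring
    _ ≤ δ * (2 * R) + (1 + R) * (2 * δ) := by
        have hδ : 0 ≤ δ := (norm_nonneg _).trans ha
        gcongr
    _ ≤ 4 * (1 + R) * δ := by nlinarith [(norm_nonneg _).trans ha]

theorem mem_nearSlopes_sub_of_mem_tube {R δ : ℝ} {p : V × V} {x y : ℝ × V}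
    (hp : p.1 ∈ closedBall 0 R) (hx : x ∈ tube δ p) (hy : y ∈ tube δ p) :
    p.1 ∈ nearSlopes R (2 * δ) (x - y) := by
  refine ⟨hp, ?_⟩
  rw [shear_sub, ← sub_sub_sub_cancel_right _ _ p.2, two_mul]
  exact (norm_sub_le _ _).trans (add_le_add hx hy)

theorem isClosed_nearSlopes (R δ : ℝ) (z : ℝ × V) : IsClosed (nearSlopes R δ z) :=
  isClosed_closedBall.inter <|
    isClosed_le (f := fun a => ‖shear a z‖) (by fun_prop) continuous_const

/-- The slopes of the lines through `x` that meet `K`. -/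
def visibleSlopes (K : Set (ℝ × V)) (x : ℝ × V) : Set V := {a | ∃ y ∈ K, shear a x = shear a y}

/-- The lines with slope in `P` that meet `K`, encoded by slope and intercept. -/
def linesThrough (P : Set V) (K : Set (ℝ × V)) : Set (V × V) :=
  (fun q => (q.1, shear q.1 q.2)) '' (P ×ˢ K)

theorem isCompact_linesThrough {P : Set V} {K : Set (ℝ × V)} (hP : IsCompact P)
    (hK : IsCompact K) : IsCompact (linesThrough P K) :=
  (hP.prod hK).image (by fun_prop)

theorem mem_cthickening_linesThrough {P : Set V} {K : Set (ℝ × V)} {δ : ℝ} {p : V × V}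
    (hp : p.1 ∈ P) (htube : (tube δ p ∩ K).Nonempty) : p ∈ cthickening δ (linesThrough P K) := by
  obtain ⟨y, hy, hyK⟩ := htube
  refine mem_cthickening_of_dist_le p (p.1, shear p.1 y) δ _ ⟨(p.1, y), ⟨hp, hyK⟩, rfl⟩ ?_
  rw [Prod.dist_eq, dist_self, dist_comm, dist_eq_norm]
  exact max_le ((norm_nonneg _).trans hy) hy

variable [FiniteDimensional ℝ V] [MeasurableSpace V] [BorelSpace V]
  {η : Measure V} [η.IsAddHaarMeasure]

theorem measure_nearSlopes_le {R δ : ℝ} (hR : 0 ≤ R) (hδ : 0 ≤ δ) {z : ℝ × V} (hz : z ≠ 0) :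
    η (nearSlopes R δ z) ≤ ENNReal.ofReal (4 * (1 + R)) ^ Module.finrank ℝ V *
      η (closedBall 0 δ) * ‖z‖ₑ ^ (-(Module.finrank ℝ V : ℝ)) := by
  obtain hempty | ⟨a, ha⟩ := (nearSlopes R δ z).eq_empty_or_nonempty
  · simp [hempty]
  have hz' : 0 < ‖z‖ := norm_pos_iff.2 hz
  have hsub : nearSlopes R δ z ⊆ closedBall a (4 * (1 + R) * ‖z‖⁻¹ * δ) := fun b hb => by
    rw [mem_closedBall_iff_norm, mul_right_comm, ← div_eq_mul_inv, le_div_iff₀' hz']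
    exact norm_mul_norm_sub_le_of_mem_nearSlopes hb ha
  refine (measure_mono hsub).trans_eq ?_
  rw [Measure.addHaar_closedBall_mul _ _ (by positivity) hδ, ENNReal.ofReal_pow (by positivity),
    ENNReal.ofReal_mul (by positivity), ENNReal.ofReal_inv_of_pos hz', ofReal_norm, mul_pow,
    ENNReal.rpow_neg, ENNReal.rpow_natCast, ENNReal.inv_pow]
  ring

theorem le_measure_nearSlopes {B r δ : ℝ} (hr : 0 < r) (hδ : 0 ≤ δ) (hδB : δ ≤ B) {z : ℝ × V}
    (hz : r ≤ z.1) (hzB : ‖z‖ ≤ B) :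
    ENNReal.ofReal B⁻¹ ^ Module.finrank ℝ V * η (closedBall 0 δ) ≤
      η (nearSlopes (B / r + 1) δ z) := by
  have hz1 : 0 < z.1 := hr.trans_le hz
  have hz1B : z.1 ≤ B := (le_abs_self _).trans ((norm_fst_le z).trans hzB)
  have hB : 0 < B := hz1.trans_le hz1B
  rw [← ENNReal.ofReal_pow (by positivity),
    ← Measure.addHaar_closedBall_mul η (z.1⁻¹ • z.2) (by positivity) hδ]
  refine measure_mono fun a ha => ⟨?_, ?_⟩
  · rw [mem_closedBall_zero_iff]
    have h1 : ‖z.1⁻¹ • z.2‖ ≤ B / r := by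
      rw [norm_smul, norm_inv, Real.norm_of_nonneg hz1.le, inv_mul_eq_div]
      exact div_le_div₀ hB.le ((norm_snd_le z).trans hzB) hr hz
    have h2 : B⁻¹ * δ ≤ 1 := by rwa [inv_mul_le_one₀ hB]
    linarith [norm_le_norm_add_norm_sub' a (z.1⁻¹ • z.2), mem_closedBall_iff_norm.1 ha]
  · have hshear : shear a z = z.1 • (z.1⁻¹ • z.2 - a) := by
      rw [smul_sub, smul_inv_smul₀ hz1.ne', shear]
    rw [hshear, norm_smul, Real.norm_of_nonneg hz1.le, norm_sub_rev]
    calc z.1 * ‖a - z.1⁻¹ • z.2‖ ≤ B * (B⁻¹ * δ) := by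
          gcongr
          exact mem_closedBall_iff_norm.1 ha
      _ = δ := mul_inv_cancel_left₀ hB.ne' δ

end Shear

section LineMeasure

variable {V : Type*} [NormedAddCommGroup V] [NormedSpace ℝ V]
  [MeasurableSpace V] [BorelSpace V] {η : Measure V} [η.IsAddHaarMeasure]

/-- The distribution of the line through `x` with slope `a`, encoded by its slope and intercept,
when `a` and `x` are independent with laws `σ` and `μ`. -/
noncomputable def lineMeasure (σ : Measure V) (μ : Measure (ℝ × V)) : Measure (V × V) :=
  (σ.prod μ).map fun q => (q.1, shear q.1 q.2)

instance {σ : Measure V} {μ : Measure (ℝ × V)} [IsFiniteMeasure σ] [IsFiniteMeasure μ] :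
    IsFiniteMeasure (lineMeasure σ μ) := by
  unfold lineMeasure
  infer_instance

theorem setLAverage_closedBall_shear (δ : ℝ) (f : V × V → ℝ≥0∞) (q : V × (ℝ × V)) :
    ⨍⁻ w in closedBall (shear q.1 q.2) δ, f (q.1, w) ∂η =
      (η (closedBall 0 δ))⁻¹ * ∫⁻ w in {w | q.2 ∈ tube δ (q.1, w)}, f (q.1, w) ∂η := by
  have hball : closedBall (shear q.1 q.2) δ = {w | q.2 ∈ tube δ (q.1, w)} :=
    ext fun w => mem_closedBall_iff_norm'
  rw [setLAverage_eq, Measure.addHaar_closedBall_center, ENNReal.div_eq_inv_mul, hball]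

variable [FiniteDimensional ℝ V]

theorem lintegral_lineMeasure (σ : Measure V) (μ : Measure (ℝ × V)) {f : V × V → ℝ≥0∞}
    (hf : Measurable f) :
    ∫⁻ p, f p ∂lineMeasure σ μ = ∫⁻ q, f (q.1, shear q.1 q.2) ∂σ.prod μ :=
  lintegral_map hf (by fun_prop)

variable {μ : Measure (ℝ × V)} [IsFiniteMeasure μ] {R t : ℝ}

theorem measurable_measure_tube (δ : ℝ) : Measurable fun p : V × V => μ (tube δ p) :=
  measurable_measure_prodMk_left (isClosed_setOf_mem_tube δ).measurableSet

theorem prod_setOf_mem_tube_le (R δ : ℝ) (x y : ℝ × V) :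
    (η.restrict (closedBall 0 R)).prod η {p | x ∈ tube δ p ∧ y ∈ tube δ p} ≤
      η (nearSlopes R (2 * δ) (x - y)) * η (closedBall 0 δ) := by
  have hmeas (x : ℝ × V) : MeasurableSet {p : V × V | x ∈ tube δ p} :=
    (isClosed_setOf_mem_tube δ).measurableSet.preimage (by fun_prop : Measurable (·, x))
  rw [ofPred_and, Measure.prod_apply ((hmeas x).inter (hmeas y)), mul_comm,
    ← setLIntegral_const, ← lintegral_indicator (isClosed_nearSlopes R _ _).measurableSet,
    ← lintegral_indicator measurableSet_closedBall]
  refine lintegral_mono fun a => indicator_apply_le fun ha => ?_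
  by_cases hslope : a ∈ nearSlopes R (2 * δ) (x - y)
  · rw [indicator_of_mem hslope, ← Measure.addHaar_closedBall_center η (shear a x)]
    refine measure_mono fun b hb => ?_
    rw [mem_closedBall_iff_norm']
    exact hb.1
  · refine (measure_mono_null (fun b hb => hslope ?_) measure_empty).trans_le zero_le
    exact mem_nearSlopes_sub_of_mem_tube ha hb.1 hb.2

theorem IsFrostman.exists_lintegral_measure_tube_sq_le (hμ : IsFrostman t μ)
    (ht : Module.finrank ℝ V < t) (hR : 0 ≤ R) :
    ∃ C : NNReal, ∀ δ, 0 ≤ δ →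
      ∫⁻ p, μ (tube δ p) ^ 2 ∂(η.restrict (closedBall 0 R)).prod η ≤
        C * η (closedBall 0 δ) ^ 2 := by
  obtain ⟨C, hC⟩ := hμ.exists_rieszPotential_le (Nat.cast_nonneg _) ht
  set m := Module.finrank ℝ V
  let D := ENNReal.ofReal (4 * (1 + R)) ^ m * ENNReal.ofReal (2 ^ m)
  have hD : D * C * μ univ ≠ ∞ := by finiteness
  refine ⟨(D * C * μ univ).toNNReal, fun δ hδ => ?_⟩
  rw [ENNReal.coe_toNNReal hD]
  have hpair {x y : ℝ × V} (hxy : x ≠ y) :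
      (η.restrict (closedBall 0 R)).prod η {p | x ∈ tube δ p ∧ y ∈ tube δ p} ≤
        D * η (closedBall 0 δ) ^ 2 * edist x y ^ (-(m : ℝ)) := by
    refine (prod_setOf_mem_tube_le R δ x y).trans ?_
    grw [measure_nearSlopes_le hR (by positivity) (sub_ne_zero.2 hxy)]
    rw [Measure.addHaar_closedBall_mul η 0 zero_le_two hδ, edist_eq_enorm_sub]
    exact le_of_eq (by unfold D; ring)
  have hne (x : ℝ × V) : ∀ᵐ y ∂μ, x ≠ y := by
    have := compl_mem_ae_iff.2 (hμ.measure_singleton ((Nat.cast_nonneg _).trans_lt ht) x)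
    filter_upwards [this] with y hy using fun h => hy h.symm
  calc ∫⁻ p, μ (tube δ p) ^ 2 ∂(η.restrict (closedBall 0 R)).prod η
      = ∫⁻ x, ∫⁻ y, (η.restrict (closedBall 0 R)).prod η {p | x ∈ tube δ p ∧ y ∈ tube δ p} ∂μ ∂μ :=
        lintegral_measure_prodMk_sq (isClosed_setOf_mem_tube δ).measurableSet
    _ ≤ ∫⁻ x, ∫⁻ y, D * η (closedBall 0 δ) ^ 2 * edist x y ^ (-(m : ℝ)) ∂μ ∂μ :=
        lintegral_mono fun x => lintegral_mono_ae ((hne x).mono fun y => hpair)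
    _ = ∫⁻ x, D * η (closedBall 0 δ) ^ 2 * rieszPotential m μ x ∂μ := by
        simp_rw [rieszPotential]
        exact lintegral_congr fun x => lintegral_const_mul _ (by fun_prop)
    _ ≤ ∫⁻ _, D * η (closedBall 0 δ) ^ 2 * C ∂μ := by
        gcongr with x
        exact hC x
    _ = D * C * μ univ * η (closedBall 0 δ) ^ 2 := by
        rw [lintegral_const]
        ring

theorem measurable_setLAverage_closedBall_shear (δ : ℝ) {f : V × V → ℝ≥0∞} (hf : Measurable f) :
    Measurable fun q : V × (ℝ × V) =>
      ⨍⁻ w in closedBall (shear q.1 q.2) δ, f (q.1, w) ∂η := by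
  simp_rw [setLAverage_closedBall_shear]
  exact (measurable_setLIntegral_prodMk (isClosed_setOf_mem_tube δ).measurableSet hf).const_mul _

variable {σ : Measure V}

theorem lintegral_setLAverage_closedBall_shear (δ : ℝ) {f : V × V → ℝ≥0∞} (hf : Measurable f) :
    ∫⁻ q, ⨍⁻ w in closedBall (shear q.1 q.2) δ, f (q.1, w) ∂η ∂σ.prod μ =
      (η (closedBall 0 δ))⁻¹ * ∫⁻ p, f p * μ (tube δ p) ∂σ.prod η := by
  have hS := (isClosed_setOf_mem_tube (V := V) δ).measurableSet
  simp_rw [setLAverage_closedBall_shear]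
  exact (lintegral_const_mul _ (measurable_setLIntegral_prodMk hS hf)).trans
    (congrArg _ (lintegral_setLIntegral_prodMk hS hf))

theorem sq_lintegral_setLAverage_closedBall_shear_le {C : ℝ≥0∞} {δ : ℝ} (hδ : 0 < δ)
    (hC : ∫⁻ p, μ (tube δ p) ^ 2 ∂σ.prod η ≤ C * η (closedBall 0 δ) ^ 2)
    {f : V × V → ℝ≥0∞} (hf : Measurable f) :
    (∫⁻ q, ⨍⁻ w in closedBall (shear q.1 q.2) δ, f (q.1, w) ∂η ∂σ.prod μ) ^ 2 ≤
      C * ∫⁻ p, f p ^ 2 ∂σ.prod η := by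
  have hpos := (measure_closedBall_pos η 0 hδ).ne'
  rw [lintegral_setLAverage_closedBall_shear δ hf, mul_pow]
  calc (η (closedBall 0 δ))⁻¹ ^ 2 * (∫⁻ p, f p * μ (tube δ p) ∂σ.prod η) ^ 2
      ≤ (η (closedBall 0 δ))⁻¹ ^ 2 *
          ((∫⁻ p, f p ^ 2 ∂σ.prod η) * (C * η (closedBall 0 δ) ^ 2)) := by
        grw [sq_lintegral_mul_le hf.aemeasurable (measurable_measure_tube δ).aemeasurable, hC]
    _ = ((η (closedBall 0 δ))⁻¹ * η (closedBall 0 δ)) ^ 2 * (C * ∫⁻ p, f p ^ 2 ∂σ.prod η) := by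
        ring
    _ = C * ∫⁻ p, f p ^ 2 ∂σ.prod η := by
        rw [ENNReal.inv_mul_cancel hpos measure_closedBall_lt_top.ne, one_pow, one_mul]

theorem sq_lintegral_lineMeasure_le_of_lowerSemicontinuous {C : ℝ≥0∞}
    (hC : ∀ δ > 0, ∫⁻ p, μ (tube δ p) ^ 2 ∂σ.prod η ≤ C * η (closedBall 0 δ) ^ 2)
    {f : V × V → ℝ≥0∞} (hf : LowerSemicontinuous f) :
    (∫⁻ p, f p ∂lineMeasure σ μ) ^ 2 ≤ C * ∫⁻ p, f p ^ 2 ∂σ.prod η := by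
  rw [lintegral_lineMeasure σ μ hf.measurable, ← ENNReal.rpow_two,
    ← ENNReal.le_rpow_inv_iff two_pos]
  calc ∫⁻ q, f (q.1, shear q.1 q.2) ∂σ.prod μ
      ≤ ∫⁻ q, (nhdsWithin 0 (Ioi 0)).liminf
          fun δ => ⨍⁻ w in closedBall (shear q.1 q.2) δ, f (q.1, w) ∂η ∂σ.prod μ :=
        lintegral_mono fun q => le_liminf_setLAverage_closedBall
          ((hf _).comp (Continuous.prodMk_right q.1).continuousAt) Filter.tendsto_id
    _ ≤ (nhdsWithin 0 (Ioi 0)).liminf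
          fun δ => ∫⁻ q, ⨍⁻ w in closedBall (shear q.1 q.2) δ, f (q.1, w) ∂η ∂σ.prod μ :=
        lintegral_liminf_le fun δ => measurable_setLAverage_closedBall_shear δ hf.measurable
    _ ≤ (C * ∫⁻ p, f p ^ 2 ∂σ.prod η) ^ (2⁻¹ : ℝ) := by
        refine Filter.liminf_le_of_frequently_le' (Filter.Eventually.frequently ?_)
        filter_upwards [self_mem_nhdsWithin] with δ hδ
        rw [ENNReal.le_rpow_inv_iff two_pos, ENNReal.rpow_two]
        exact sq_lintegral_setLAverage_closedBall_shear_le hδ (hC δ hδ) hf.measurable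

theorem IsFrostman.exists_sq_lintegral_lineMeasure_le (hμ : IsFrostman t μ)
    (ht : Module.finrank ℝ V < t) (hR : 0 ≤ R) :
    ∃ C : NNReal, ∀ f : V × V → ℝ≥0∞, Measurable f →
      (∫⁻ p, f p ∂lineMeasure (η.restrict (closedBall 0 R)) μ) ^ 2 ≤
        C * ∫⁻ p, f p ^ 2 ∂(η.restrict (closedBall 0 R)).prod η := by
  obtain ⟨C, hC⟩ := hμ.exists_lintegral_measure_tube_sq_le (η := η) ht hR
  exact ⟨C, fun f hf => sq_lintegral_le_of_lowerSemicontinuous ENNReal.coe_ne_top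
    (fun g hg => sq_lintegral_lineMeasure_le_of_lowerSemicontinuous (fun δ hδ => hC δ hδ.le) hg) hf⟩

end LineMeasure

section Visibility

variable {V : Type*} [NormedAddCommGroup V] [NormedSpace ℝ V] [FiniteDimensional ℝ V]
  [MeasurableSpace V] [BorelSpace V] {η : Measure V} [η.IsAddHaarMeasure]
  {μ ν : Measure (ℝ × V)} [IsFiniteMeasure μ] [IsFiniteMeasure ν] {t t' : ℝ}

theorem setLIntegral_measure_tube_shear (R δ : ℝ) (x : ℝ × V) :
    ∫⁻ a in closedBall 0 R, ν (tube δ (a, shear a x)) ∂η = ∫⁻ y, η (nearSlopes R δ (y - x)) ∂ν := by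
  have hS : MeasurableSet {q : V × (ℝ × V) | q.2 ∈ tube δ (q.1, shear q.1 x)} :=
    (isClosed_setOf_mem_tube δ).measurableSet.preimage
      (by fun_prop : Measurable fun q : V × (ℝ × V) => ((q.1, shear q.1 x), q.2))
  calc ∫⁻ a in closedBall 0 R, ν (tube δ (a, shear a x)) ∂η
      = ((η.restrict (closedBall 0 R)).prod ν) {q | q.2 ∈ tube δ (q.1, shear q.1 x)} :=
        (Measure.prod_apply hS).symm
    _ = ∫⁻ y, η.restrict (closedBall 0 R) {a | y ∈ tube δ (a, shear a x)} ∂ν :=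
        Measure.prod_apply_symm hS
    _ = ∫⁻ y, η (nearSlopes R δ (y - x)) ∂ν := by
        refine lintegral_congr fun y => ?_
        rw [Measure.restrict_apply' measurableSet_closedBall, inter_comm]
        simp only [tube, nearSlopes, shear_sub]
        rfl

theorem le_lintegral_measure_tube_lineMeasure {B r δ : ℝ} (hr : 0 < r) (hδ : 0 ≤ δ) (hδB : δ ≤ B)
    (hsep : ∀ᵐ x ∂μ, ∀ᵐ y ∂ν, r ≤ (y - x).1 ∧ ‖y - x‖ ≤ B) :
    ENNReal.ofReal B⁻¹ ^ Module.finrank ℝ V * η (closedBall 0 δ) * ν univ * μ univ ≤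
      ∫⁻ p, ν (tube δ p) ∂lineMeasure (η.restrict (closedBall 0 (B / r + 1))) μ := by
  have hmeas : Measurable fun q : V × (ℝ × V) => ν (tube δ (q.1, shear q.1 q.2)) :=
    (measurable_measure_tube δ).comp (by fun_prop)
  rw [lintegral_lineMeasure _ _ (measurable_measure_tube δ),
    lintegral_prod_symm _ hmeas.aemeasurable]
  simp_rw [setLIntegral_measure_tube_shear, ← lintegral_const]
  exact lintegral_mono_ae <| hsep.mono fun x hx => lintegral_mono_ae <| hx.mono fun y hy =>
    le_measure_nearSlopes hr hδ hδB hy.1 hy.2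

theorem lineMeasure_linesThrough_eq_zero {P : Set V} {K : Set (ℝ × V)} (hP : IsCompact P)
    (hK : IsCompact K) (hnull : ∀ᵐ x ∂μ, η (visibleSlopes K x) = 0) :
    lineMeasure (η.restrict P) μ (linesThrough P K) = 0 := by
  have hmeas : Measurable fun q : V × (ℝ × V) => (q.1, shear q.1 q.2) := by fun_prop
  have hZ : MeasurableSet (linesThrough P K) := (isCompact_linesThrough hP hK).measurableSet
  rw [lineMeasure, Measure.map_apply hmeas hZ, Measure.prod_apply_symm (hmeas hZ),
    lintegral_eq_zero_iff (measurable_measure_prodMk_right (hmeas hZ))]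
  refine hnull.mono fun x hx => ?_
  refine Measure.absolutelyContinuous_of_le Measure.restrict_le_self (measure_mono_null ?_ hx)
  rintro a ⟨⟨b, y⟩, ⟨-, hy⟩, hab⟩
  obtain ⟨rfl, hshear⟩ := Prod.ext_iff.1 hab
  exact ⟨y, hy, hshear.symm⟩

theorem exists_sq_le_mul_measure_cthickening_linesThrough (hμ : IsFrostman t μ)
    (hν : IsFrostman t' ν) (ht : Module.finrank ℝ V < t) (ht' : Module.finrank ℝ V < t')
    {K : Set (ℝ × V)} (hνK : ν Kᶜ = 0) {B r : ℝ} (hr : 0 < r) (hB : 0 < B)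
    (hsep : ∀ᵐ x ∂μ, ∀ᵐ y ∂ν, r ≤ (y - x).1 ∧ ‖y - x‖ ≤ B) :
    ∃ (C : NNReal) (κ : Measure (V × V)), IsFiniteMeasure κ ∧
      κ ≪ lineMeasure (η.restrict (closedBall 0 (B / r + 1))) μ ∧ ∀ δ ∈ Ioo 0 B,
        (ENNReal.ofReal B⁻¹ ^ Module.finrank ℝ V * ν univ * μ univ) ^ 2 ≤
          C * κ (cthickening δ (linesThrough (closedBall 0 (B / r + 1)) K)) := by
  have hR : 0 ≤ B / r + 1 := by positivity
  obtain ⟨Cμ, hCμ⟩ := hμ.exists_sq_lintegral_lineMeasure_le (η := η) ht hR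
  obtain ⟨Cν, hCν⟩ := hν.exists_lintegral_measure_tube_sq_le (η := η) ht' hR
  have hfinite : IsFiniteMeasure (η.restrict (closedBall 0 (B / r + 1))) :=
    isFiniteMeasure_restrict.2 measure_closedBall_lt_top.ne
  obtain ⟨κ, hκ, hκΦ, hΦκ⟩ := exists_sq_lintegral_le_mul_measure ENNReal.coe_ne_top hCμ
  refine ⟨Cν, κ, hκ, hκΦ, fun δ ⟨hδ, hδB⟩ => ?_⟩
  set P : Set V := closedBall 0 (B / r + 1)
  set b := ENNReal.ofReal B⁻¹ ^ Module.finrank ℝ V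
  have hsupp : ∀ᵐ p ∂(η.restrict P).prod η,
      ν (tube δ p) ≠ 0 → p ∈ cthickening δ (linesThrough P K) := by
    filter_upwards [Measure.quasiMeasurePreserving_fst.ae
      (ae_restrict_mem measurableSet_closedBall)] with p hp hν0
    refine mem_cthickening_linesThrough hp (not_disjoint_iff_nonempty_inter.1 fun h => hν0 ?_)
    exact measure_mono_null h.subset_compl_right hνK
  have hpos := (measure_closedBall_pos η 0 hδ).ne'
  refine (ENNReal.mul_le_mul_iff_right (pow_ne_zero 2 hpos)
    (ENNReal.pow_ne_top measure_closedBall_lt_top.ne)).1 ?_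
  calc η (closedBall 0 δ) ^ 2 * (b * ν univ * μ univ) ^ 2
      = (b * η (closedBall 0 δ) * ν univ * μ univ) ^ 2 := by ring
    _ ≤ (∫⁻ p, ν (tube δ p) ∂lineMeasure (η.restrict P) μ) ^ 2 := by
        gcongr
        exact le_lintegral_measure_tube_lineMeasure hr hδ.le hδB.le hsep
    _ ≤ (∫⁻ p, ν (tube δ p) ^ 2 ∂(η.restrict P).prod η) * κ (cthickening δ (linesThrough P K)) :=
        hΦκ _ isClosed_cthickening.measurableSet _ (measurable_measure_tube δ) hsupp
    _ ≤ Cν * η (closedBall 0 δ) ^ 2 * κ (cthickening δ (linesThrough P K)) := by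
        grw [hCν δ hδ.le]
    _ = η (closedBall 0 δ) ^ 2 * (Cν * κ (cthickening δ (linesThrough P K))) := by ring

theorem eq_zero_or_eq_zero_of_ae_measure_visibleSlopes_eq_zero (hμ : IsFrostman t μ)
    (hν : IsFrostman t' ν) (ht : Module.finrank ℝ V < t) (ht' : Module.finrank ℝ V < t')
    {K : Set (ℝ × V)} (hK : IsCompact K) (hνK : ν Kᶜ = 0) {B r : ℝ} (hr : 0 < r) (hB : 0 < B)
    (hsep : ∀ᵐ x ∂μ, ∀ᵐ y ∂ν, r ≤ (y - x).1 ∧ ‖y - x‖ ≤ B)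
    (hnull : ∀ᵐ x ∂μ, η (visibleSlopes K x) = 0) : μ = 0 ∨ ν = 0 := by
  obtain ⟨C, κ, hκ, hκμ, hle⟩ :=
    exists_sq_le_mul_measure_cthickening_linesThrough (η := η) hμ hν ht ht' hνK hr hB hsep
  set P : Set V := closedBall 0 (B / r + 1)
  have hP : IsCompact P := isCompact_closedBall 0 _
  have hκZ : κ (linesThrough P K) = 0 := hκμ (lineMeasure_linesThrough_eq_zero hP hK hnull)
  have hlim : Filter.Tendsto (fun δ => C * κ (cthickening δ (linesThrough P K)))
      (nhdsWithin 0 (Ioi 0)) (nhds (C * κ (linesThrough P K))) :=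
    (ENNReal.Tendsto.const_mul
      (tendsto_measure_cthickening_of_isCompact (isCompact_linesThrough hP hK))
      (.inr ENNReal.coe_ne_top)).mono_left nhdsWithin_le_nhds
  have hzero := ge_of_tendsto hlim (Filter.mem_of_superset (Ioo_mem_nhdsGT hB) hle)
  have hb : ENNReal.ofReal B⁻¹ ^ Module.finrank ℝ V ≠ 0 :=
    pow_ne_zero _ (ENNReal.ofReal_pos.2 (by positivity)).ne'
  simpa [hκZ, hb, or_comm] using hzero

theorem measurableSet_setOf_measure_visibleSlopes_eq_zero {K : Set (ℝ × V)} (hK : IsCompact K) :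
    MeasurableSet {x : ℝ × V | η (visibleSlopes K x) = 0} := by
  have hclosed : IsClosed {q : (ℝ × V) × V | q.2 ∈ visibleSlopes K q.1} := by
    have := isCompact_iff_compactSpace.1 hK
    have hS : IsClosed {s : ((ℝ × V) × V) × K | shear s.1.2 s.1.1 = shear s.1.2 (s.2 : ℝ × V)} :=
      isClosed_eq (by fun_prop) (by fun_prop)
    convert isClosedMap_fst_of_compactSpace _ hS using 1
    ext q
    simp [visibleSlopes]
  exact measurable_measure_prodMk_left hclosed.measurableSet (measurableSet_singleton 0)

theorem dimH_setOf_measure_visibleSlopes_eq_zero_le (hν : IsFrostman t ν)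
    (ht : Module.finrank ℝ V < t) {K : Set (ℝ × V)} (hK : IsCompact K) (hνK : ν Kᶜ = 0)
    (hν0 : ν ≠ 0) {c r : ℝ} (hr : 0 < r) (hKc : ∀ y ∈ K, c + r ≤ y.1) :
    dimH {x : ℝ × V | x.1 ≤ c ∧ η (visibleSlopes K x) = 0} ≤ Module.finrank ℝ V := by
  by_contra! hlt
  have hE : MeasurableSet {x : ℝ × V | x.1 ≤ c ∧ η (visibleSlopes K x) = 0} :=
    (measurableSet_le measurable_fst measurable_const).inter
      (measurableSet_setOf_measure_visibleSlopes_eq_zero hK)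
  obtain ⟨t', ht', L, hLE, hL, μ, hμfin, hμ0, hμL, hμ⟩ :=
    IsFrostman.exists_of_lt_dimH (s := Module.finrank ℝ V) hE.analyticSet (by simpa using hlt)
  obtain ⟨B, hB, hLB⟩ := (hL.union hK).isBounded.exists_pos_norm_le
  have hμL' : ∀ᵐ x ∂μ, x ∈ L := mem_ae_iff.2 hμL
  have hνK' : ∀ᵐ y ∂ν, y ∈ K := mem_ae_iff.2 hνK
  have hsep : ∀ᵐ x ∂μ, ∀ᵐ y ∂ν, r ≤ (y - x).1 ∧ ‖y - x‖ ≤ B + B := by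
    filter_upwards [hμL'] with x hx
    filter_upwards [hνK'] with y hy
    exact ⟨by linarith [hKc y hy, (hLE hx).1, Prod.fst_sub y x],
      norm_sub_le_of_le (hLB y (.inr hy)) (hLB x (.inl hx))⟩
  exact (eq_zero_or_eq_zero_of_ae_measure_visibleSlopes_eq_zero hμ hν (by simpa using ht') ht hK hνK
    hr (by positivity) hsep (hμL'.mono fun x hx => (hLE hx).2)).elim hμ0 hν0

end Visibility

section RadialProjection

variable {E V : Type*} [NormedAddCommGroup E] [NormedSpace ℝ E] [NormedAddCommGroup V]
  [NormedSpace ℝ V]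

/-- The radial projection `π_x` from `x` onto the unit sphere, with the junk value `π_x x = 0`. -/
noncomputable def radialProjection (x y : E) : E := ‖y - x‖⁻¹ • (y - x)

theorem isCompact_image_radialProjection {x : E} {L : Set E} (hL : IsCompact L) (hx : x ∉ L) :
    IsCompact (radialProjection x '' L) := by
  have hne : ∀ y ∈ L, ‖y - x‖ ≠ 0 := fun y hy =>
    norm_ne_zero_iff.2 (sub_ne_zero.2 fun h => hx (h ▸ hy))
  unfold radialProjection
  exact hL.image_of_continuousOn (by fun_prop (disch := assumption))

theorem locallyLipschitzOn_inv_fst_smul_snd :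
    LocallyLipschitzOn {u : ℝ × V | 0 < u.1} fun u => u.1⁻¹ • u.2 :=
  ContDiffOn.locallyLipschitzOn ((convex_Ioi 0).linear_preimage (LinearMap.fst ℝ ℝ V))
    ((contDiffOn_fst.inv fun _ hu => (ne_of_gt hu)).smul contDiffOn_snd)

theorem visibleSlopes_image_subset (T : E →L[ℝ] ℝ × V) {L : Set E} {x : E}
    (hxL : ∀ y ∈ L, (T x).1 < (T y).1) :
    visibleSlopes (T '' L) (T x) ⊆
      (fun u => u.1⁻¹ • u.2) '' (T '' (radialProjection x '' L)) := by
  rintro a ⟨_, ⟨y, hy, rfl⟩, hay⟩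
  refine ⟨_, mem_image_of_mem T (mem_image_of_mem _ hy), ?_⟩
  have hpos : 0 < (T (y - x)).1 := by simpa using hxL y hy
  have hne : ‖y - x‖ ≠ 0 := norm_ne_zero_iff.2 fun h => by simp [h] at hpos
  have ha : (T (y - x)).2 = (T (y - x)).1 • a := by
    rw [← sub_eq_zero, ← shear, map_sub, shear_sub, hay, sub_self]
  simp only [radialProjection, map_smul, Prod.smul_fst, Prod.smul_snd, ha, smul_smul, smul_eq_mul]
  convert one_smul ℝ a
  field_simp

theorem hausdorffMeasure_visibleSlopes_eq_zero [MeasurableSpace E] [BorelSpace E]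
    [MeasurableSpace V] [BorelSpace V] (T : E →L[ℝ] ℝ × V) {L : Set E} (hL : IsCompact L)
    {x : E} (hxL : ∀ y ∈ L, (T x).1 < (T y).1) {d : ℝ} (hd : 0 ≤ d)
    (hnull : μH[d] (radialProjection x '' L) = 0) :
    μH[d] (visibleSlopes (T '' L) (T x)) = 0 := by
  have hpos : T '' (radialProjection x '' L) ⊆ {u | 0 < u.1} := by
    rintro _ ⟨_, ⟨y, hy, rfl⟩, rfl⟩
    have hy' : 0 < (T (y - x)).1 := by simpa using hxL y hy
    have hne : 0 < ‖y - x‖ := norm_pos_iff.2 fun h => by simp [h] at hy'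
    simpa [radialProjection, hne] using hy'
  have hcompact : IsCompact (T '' (radialProjection x '' L)) :=
    (isCompact_image_radialProjection hL fun h => (hxL x h).false).image T.continuous
  obtain ⟨C, hC⟩ := (locallyLipschitzOn_inv_fst_smul_snd.mono hpos)
    |>.exists_lipschitzOnWith_of_compact hcompact
  have hTnull : μH[d] (T '' (radialProjection x '' L)) = 0 := by
    simpa [hnull] using T.lipschitz.hausdorffMeasure_image_le hd (radialProjection x '' L)
  have hle := hC.hausdorffMeasure_image_le hd
  rw [hTnull, mul_zero] at hle
  exact measure_mono_null (visibleSlopes_image_subset T hxL) (le_zero_iff.1 hle)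

theorem exists_continuousLinearEquiv_fst_eq {φ : E →L[ℝ] ℝ} (hφ : φ ≠ 0) :
    ∃ T : E ≃L[ℝ] ℝ × φ.ker, ∀ x, (T x).1 = φ x := by
  obtain ⟨e, he⟩ : ∃ e, φ e = 1 := by
    obtain ⟨u, hu⟩ := DFunLike.ne_iff.1 hφ
    exact ⟨(φ u)⁻¹ • u, by simp_all⟩
  exact ⟨.equivOfRightInverse φ (.toSpanSingleton ℝ e) fun s => by simp [he], fun x => by simp⟩

end RadialProjection

theorem exists_continuousLinearMap_measure_setOf_ne_zero {E : Type*} [NormedAddCommGroup E]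
    [NormedSpace ℝ E] [SecondCountableTopology E] [MeasurableSpace E] (ν : Measure E)
    [NullSingletonClass ν] [NeZero ν] :
    ∃ (φ : E →L[ℝ] ℝ) (c r : ℝ), φ ≠ 0 ∧ 0 < r ∧
      ν {y | c + r ≤ φ y} ≠ 0 ∧ ν {y | φ y ≤ c - r} ≠ 0 := by
  obtain ⟨y, hy⟩ := Measure.nonempty_support (NeZero.ne ν)
  obtain ⟨z, hz, hzy⟩ : ∃ z ∈ ν.support, z ≠ y := by
    by_contra! h
    have hnull : ν ν.support = 0 := measure_mono_null h (measure_singleton y)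
    simpa [NeZero.ne ν] using measure_union_null hnull (Measure.measure_compl_support (μ := ν))
  obtain ⟨φ, hφ⟩ : ∃ φ : E →L[ℝ] ℝ, φ y < φ z := by
    obtain ⟨φ, hφ⟩ := SeparatingDual.exists_separating_of_ne (R := ℝ) hzy
    exact hφ.lt_or_gt.elim (fun h => ⟨-φ, by simpa using h⟩) fun h => ⟨φ, h⟩
  refine ⟨φ, (φ y + φ z) / 2, (φ z - φ y) / 4, ?_, by linarith, ?_, ?_⟩
  · rintro rfl
    simp at hφ
  · refine ((Measure.mem_support_iff_forall z).1 hz _ ?_).ne'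
    exact φ.continuous.continuousAt.preimage_mem_nhds (Ici_mem_nhds (by linarith))
  · refine ((Measure.mem_support_iff_forall y).1 hy _ ?_).ne'
    exact φ.continuous.continuousAt.preimage_mem_nhds (Iic_mem_nhds (by linarith))

section Invisibility

variable {E V : Type*} [NormedAddCommGroup E] [NormedSpace ℝ E] [MeasurableSpace E] [BorelSpace E]
  [NormedAddCommGroup V] [NormedSpace ℝ V] [FiniteDimensional ℝ V] [MeasurableSpace V]
  [BorelSpace V] {ν : Measure E} [IsFiniteMeasure ν] {t c r : ℝ} {K : Set E}

theorem dimH_setOf_fst_le_image_radialProjection_null_le (hν : IsFrostman t ν)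
    (T : E ≃L[ℝ] ℝ × V) (ht : Module.finrank ℝ V < t) (hK : IsCompact K) (hνK : ν Kᶜ = 0)
    (hν0 : ν ≠ 0) (hr : 0 < r) (hKc : ∀ y ∈ K, c + r ≤ (T y).1) :
    dimH {x | (T x).1 ≤ c ∧ μH[Module.finrank ℝ V] (radialProjection x '' K) = 0} ≤
      Module.finrank ℝ V := by
  have hT : MeasurableEmbedding T := T.toHomeomorph.measurableEmbedding
  have hνT : IsFrostman t (ν.map T) := hν.map ((Nat.cast_nonneg _).trans ht.le) hT T.antilipschitz
  have hnull : ν.map T (T '' K)ᶜ = 0 := by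
    rwa [hT.map_apply, preimage_compl, preimage_image_eq K T.injective]
  have hne : ν.map T ≠ 0 := (Measure.map_ne_zero_iff hT.measurable.aemeasurable).2 hν0
  rw [← T.dimH_image]
  refine (dimH_mono ?_).trans <| dimH_setOf_measure_visibleSlopes_eq_zero_le
    (η := μH[Module.finrank ℝ V]) hνT ht (hK.image T.continuous) hnull hne hr
    (forall_mem_image.2 hKc)
  rintro _ ⟨x, ⟨hxc, hx⟩, rfl⟩
  exact ⟨hxc, hausdorffMeasure_visibleSlopes_eq_zero (T : E →L[ℝ] ℝ × V) hK
    (fun y hy => show (T x).1 < (T y).1 by linarith [hKc y hy]) (Nat.cast_nonneg _) hx⟩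

theorem dimH_setOf_le_image_radialProjection_null_le [FiniteDimensional ℝ E]
    (hν : IsFrostman t ν) (ht : (Module.finrank ℝ E : ℝ) - 1 < t) (hK : IsCompact K)
    {φ : E →L[ℝ] ℝ} (hφ : φ ≠ 0) (hr : 0 < r) (hνK : ν (K ∩ {y | c + r ≤ φ y}) ≠ 0) :
    dimH {x | φ x ≤ c ∧ μH[(Module.finrank ℝ E : ℝ) - 1] (radialProjection x '' (K \ {x})) = 0} ≤
      (Module.finrank ℝ E : ℝ≥0∞) - 1 := by
  obtain ⟨T, hT⟩ := exists_continuousLinearEquiv_fst_eq hφ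
  have hdim : Module.finrank ℝ E = Module.finrank ℝ φ.ker + 1 := by
    rw [T.toLinearEquiv.finrank_eq, Module.finrank_prod, Module.finrank_self, add_comm]
  have hK' : IsCompact (K ∩ {y | c + r ≤ φ y}) :=
    hK.inter_right (isClosed_le continuous_const φ.continuous)
  simp only [hdim, Nat.cast_add, Nat.cast_one, add_sub_cancel_right,
    ENNReal.add_sub_cancel_right ENNReal.one_ne_top] at ht ⊢
  refine (dimH_mono ?_).trans <| dimH_setOf_fst_le_image_radialProjection_null_le
    (ν := ν.restrict (K ∩ {y | c + r ≤ φ y})) (c := c) (r := r)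
    (hν.mono_measure Measure.restrict_le_self) T ht hK' ?_ ?_ hr ?_
  · rintro x ⟨hxc, hx⟩
    have hsub : K ∩ {y | c + r ≤ φ y} ⊆ K \ {x} := fun y hy => ⟨hy.1, by
      rintro rfl
      linarith [hy.2.out]⟩
    exact ⟨(hT x).trans_le hxc, measure_mono_null (image_mono hsub) hx⟩
  · rw [Measure.restrict_apply hK'.measurableSet.compl, compl_inter_self, measure_empty]
  · rwa [Ne, Measure.restrict_eq_zero]
  · exact fun y hy => (hT y).symm ▸ hy.2

end Invisibility

theorem stmt_15_general {E : Type*} [NormedAddCommGroup E] [NormedSpace ℝ E]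
    [FiniteDimensional ℝ E] [MeasurableSpace E] [BorelSpace E] {A : Set E} (hA : AnalyticSet A)
    (hdA : (Module.finrank ℝ E : ℝ≥0∞) - 1 < dimH A) :
    dimH {x : E | μH[(Module.finrank ℝ E : ℝ) - 1] (radialProjection x '' (A \ {x})) = 0} ≤
      (Module.finrank ℝ E : ℝ≥0∞) - 1 := by
  obtain ⟨t, ht, L, hLA, hL, ν, hνfin, hν0, hνL, hν⟩ :=
    IsFrostman.exists_of_lt_dimH (s := Module.finrank ℝ E - 1) hA (by simpa using hdA)
  have ht0 : 0 < t := NNReal.zero_le_coe.trans_lt ht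
  have ht1 : (Module.finrank ℝ E : ℝ) - 1 < t := by simpa [NNReal.coe_sub_def, ht0] using ht
  have := NeZero.mk hν0
  have : NullSingletonClass ν := ⟨hν.measure_singleton ht0⟩
  obtain ⟨φ, c, r, hφ, hr, hpos, hneg⟩ := exists_continuousLinearMap_measure_setOf_ne_zero ν
  rw [← measure_inter_conull hνL, inter_comm] at hpos hneg
  have hbelow := dimH_setOf_le_image_radialProjection_null_le hν ht1 hL hφ hr hpos
  have habove := dimH_setOf_le_image_radialProjection_null_le (φ := -φ) (c := -c) hν ht1 hL
    (neg_ne_zero.2 hφ) hr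
    (by simpa [neg_add_le_iff_le_add, ← sub_eq_add_neg, le_sub_comm] using hneg)
  refine (dimH_mono fun x hx => ?_).trans ((dimH_union _ _).trans_le (max_le hbelow habove))
  have hxL := measure_mono_null (image_mono (sdiff_subset_sdiff_left hLA)) hx
  exact (le_total (φ x) c).imp (⟨·, hxL⟩) fun h => ⟨neg_le_neg h, hxL⟩

theorem stmt_15 (n : ℕ) (hn : 2 ≤ n)
    (A : Set (EuclideanSpace ℝ (Fin n))) (hA : MeasurableSet A)
    (hdA : (n : ℝ≥0∞) - 1 < dimH A) :
    dimH {x : EuclideanSpace ℝ (Fin n) |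
        μH[(n : ℝ) - 1] ((fun y => ‖y - x‖⁻¹ • (y - x)) '' (A \ {x})) = 0} ≤
      (n : ℝ≥0∞) - 1 := by
  have h := stmt_15_general hA.analyticSet (by rwa [finrank_euclideanSpace_fin])
  rwa [finrank_euclideanSpace_fin] at h
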